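/- Let φ: (R,m,k) → (S,n,ℓ) be a flat local ring homomorphism between commutative Noetherian local rings which is essentially of finite type and complete intersection at n, and let M be a finitely generated S-module. If CI-fd_R M < ∞, then CI-dim_S M < ∞. -/

import Mathlib

/-!
Common definitions: André–Quillen homology via the standard (comonad/polynomial)
simplicial resolution, complete-intersection (flat) dimensions via quasi-deformations,
Cohen factorizations, Koszul homology `H₁`, and related notions.
-/

universe u

open TensorProduct IsLocalRing

noncomputable section

/-! ### Flat and projective dimension -/

/-- `FlatDimLE Q n N` : the `Q`-module `N` has flat dimension at most `n`,
i.e. it admits a flat resolution of length at most `n`. -/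
def FlatDimLE (Q : Type u) [CommRing Q] : ℕ → (N : Type u) → [AddCommGroup N] → [Module Q N] → Prop
  | 0, N, _, _ => Module.Flat Q N
  | n+1, N, _, _ =>
      ∃ (F : Type u) (_ : AddCommGroup F) (_ : Module Q F) (f : F →ₗ[Q] N),
        Module.Flat Q F ∧ Function.Surjective f ∧ FlatDimLE Q n (LinearMap.ker f)

/-- `ProjDimLE Q n N` : the `Q`-module `N` has projective dimension at most `n`. -/
def ProjDimLE (Q : Type u) [CommRing Q] : ℕ → (N : Type u) → [AddCommGroup N] → [Module Q N] → Prop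
  | 0, N, _, _ => Module.Projective Q N
  | n+1, N, _, _ =>
      ∃ (F : Type u) (_ : AddCommGroup F) (_ : Module Q F) (f : F →ₗ[Q] N),
        Module.Projective Q F ∧ Function.Surjective f ∧ ProjDimLE Q n (LinearMap.ker f)

/-- The flat dimension `fd_Q N` is finite. -/
def FlatDimFinite (Q : Type u) [CommRing Q] (N : Type u) [AddCommGroup N] [Module Q N] : Prop :=
  ∃ n : ℕ, FlatDimLE Q n N

/-- The projective dimension `pd_Q N` is finite. -/
def ProjDimFinite (Q : Type u) [CommRing Q] (N : Type u) [AddCommGroup N] [Module Q N] : Prop :=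
  ∃ n : ℕ, ProjDimLE Q n N

/-! ### Regular sequences, regular local rings, complete intersection conditions -/

/-- The ideal `I` is generated by an `A`-regular sequence. -/
def GeneratedByRegularSequence (A : Type u) [CommRing A] (I : Ideal A) : Prop :=
  ∃ rs : List A, RingTheory.Sequence.IsRegular A rs ∧ Ideal.span {x | x ∈ rs} = I

/-- A (Noetherian local) ring is regular iff its maximal ideal is generated by a
regular sequence. -/
def IsRegularLocal (A : Type u) [CommRing A] : Prop :=
  IsNoetherianRing A ∧
    ∃ h : IsLocalRing A, GeneratedByRegularSequence A (@IsLocalRing.maximalIdeal A _ h)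

/-- A local homomorphism is weakly regular if it is flat with regular closed fibre. -/
def IsWeaklyRegularHom (A B : Type u) [CommRing A] [CommRing B] [IsLocalRing A]
    (f : A →+* B) : Prop :=
  IsLocalHom f ∧ (letI := f.toAlgebra; Module.Flat A B) ∧
    IsRegularLocal (B ⧸ Ideal.map f (maximalIdeal A))

/-- `R'' → f → g` is a Cohen factorization of the semi-completion of `ψ : A → B`
with respect to the (maximal) ideal `J` of `B`:  `A → R'' → B̂` with `A → R''`
weakly regular, `R''` complete Noetherian local and `R'' → B̂` surjective local. -/
def IsCohenFactorizationAt (A B : Type u) [CommRing A] [CommRing B] [IsLocalRing A]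
    (ψ : A →+* B) (J : Ideal B) (R'' : Type u) [CommRing R'']
    (f : A →+* R'') (g : R'' →+* AdicCompletion J B) : Prop :=
  g.comp f = (algebraMap B (AdicCompletion J B)).comp ψ ∧
  IsNoetherianRing R'' ∧
  (∃ h : IsLocalRing R'', IsAdicComplete (@IsLocalRing.maximalIdeal R'' _ h) R'') ∧
  IsWeaklyRegularHom A R'' f ∧
  Function.Surjective g ∧ IsLocalHom g

/-- `ψ : A → B` is complete intersection (c.i.) at the ideal `J` (typically the
maximal ideal of `B`): in a Cohen factorization `A → R'' → B̂` of the
semi-completion of `ψ`, the kernel of `R'' → B̂` is generated by a regular sequence. -/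
def IsCIAt (A B : Type u) [CommRing A] [CommRing B] [IsLocalRing A]
    (ψ : A →+* B) (J : Ideal B) : Prop :=
  ∃ (R'' : Type u) (_ : CommRing R'') (f : A →+* R'') (g : R'' →+* AdicCompletion J B),
    IsCohenFactorizationAt A B ψ J R'' f g ∧ GeneratedByRegularSequence R'' (RingHom.ker g)

/-- A Noetherian local ring is a complete intersection if its completion is the
quotient of a complete regular local ring by an ideal generated by a regular sequence. -/
def IsCompleteIntersectionRing (A : Type u) [CommRing A] : Prop :=
  IsNoetherianRing A ∧
  ∃ h : IsLocalRing A,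
    ∃ (Q : Type u) (_ : CommRing Q)
      (g : Q →+* AdicCompletion (@IsLocalRing.maximalIdeal A _ h) A),
      IsRegularLocal Q ∧ (∃ hq : IsLocalRing Q, IsAdicComplete (@IsLocalRing.maximalIdeal Q _ hq) Q) ∧
      Function.Surjective g ∧ GeneratedByRegularSequence Q (RingHom.ker g)

/-! ### Complete intersection (flat) dimensions via quasi-deformations

`R → R' ← Q` is a quasi-deformation when `R → R'` is flat local and `Q → R'` is
surjective local with kernel generated by a `Q`-regular sequence (all rings
Noetherian local).  The various complete intersection (flat) dimensions
`CI-fd`, `CI-dim`, `CI*-fd`, `CI*-dim`, `cidim-fd`, `cidim` of a module `M` are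
`inf { fd_Q(R' ⊗_R M) - pd_Q R' }` over (upper / complete intersection)
quasi-deformations; such a dimension is finite iff there is a quasi-deformation
of the appropriate kind for which both `fd_Q (R' ⊗_R M)` and `pd_Q R'` are finite. -/

/-- The conditions on `R → R' ← Q` making it a quasi-deformation. -/
def IsQuasiDeformation (R R' Q : Type u) [CommRing R] [CommRing R'] [CommRing Q]
    (f : R →+* R') (g : Q →+* R') : Prop :=
  IsLocalRing R' ∧ IsLocalRing Q ∧ IsNoetherianRing R' ∧ IsNoetherianRing Q ∧
  IsLocalHom f ∧ IsLocalHom g ∧ (letI := f.toAlgebra; Module.Flat R R') ∧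
  Function.Surjective g ∧ GeneratedByRegularSequence Q (RingHom.ker g)

/-- `CI-fd_R M < ∞` (equivalently, for finitely generated `M`, `CI-dim_R M < ∞`):
there is a quasi-deformation `R → R' ← Q` with `fd_Q (R' ⊗_R M)` and `pd_Q R'` finite. -/
def HasFiniteCIDim (R : Type u) [CommRing R] (M : Type u) [AddCommGroup M] [Module R M] : Prop :=
  ∃ (R' Q : Type u) (_ : CommRing R') (_ : CommRing Q) (f : R →+* R') (g : Q →+* R'),
    IsQuasiDeformation R R' Q f g ∧
    (letI := f.toAlgebra;
     letI := g.toAlgebra;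
     letI : Module Q (R' ⊗[R] M) := Module.compHom _ g;
     FlatDimFinite Q (R' ⊗[R] M) ∧ ProjDimFinite Q R')

/-- `CI*-fd_R M < ∞` (resp. `CI*-dim_R M < ∞`): as in `HasFiniteCIDim` but over
upper quasi-deformations, i.e. `R → R'` is weakly regular. -/
def HasFiniteUpperCIDim (R : Type u) [CommRing R] [IsLocalRing R]
    (M : Type u) [AddCommGroup M] [Module R M] : Prop :=
  ∃ (R' Q : Type u) (_ : CommRing R') (_ : CommRing Q) (f : R →+* R') (g : Q →+* R'),
    IsQuasiDeformation R R' Q f g ∧ IsWeaklyRegularHom R R' f ∧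
    (letI := f.toAlgebra;
     letI := g.toAlgebra;
     letI : Module Q (R' ⊗[R] M) := Module.compHom _ g;
     FlatDimFinite Q (R' ⊗[R] M) ∧ ProjDimFinite Q R')

/-- `cidim-fd_R M < ∞` (resp. `cidim_R M < ∞`): as in `HasFiniteCIDim` but over
complete intersection quasi-deformations, i.e. `R → R'` is c.i. at the maximal
ideal of `R'`. -/
def HasFiniteCIQDDim (R : Type u) [CommRing R] [IsLocalRing R]
    (M : Type u) [AddCommGroup M] [Module R M] : Prop :=
  ∃ (R' Q : Type u) (_ : CommRing R') (_ : CommRing Q) (hR' : IsLocalRing R')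
    (f : R →+* R') (g : Q →+* R'),
    IsQuasiDeformation R R' Q f g ∧
    IsCIAt R R' f (@IsLocalRing.maximalIdeal R' _ hR') ∧
    (letI := f.toAlgebra;
     letI := g.toAlgebra;
     letI : Module Q (R' ⊗[R] M) := Module.compHom _ g;
     FlatDimFinite Q (R' ⊗[R] M) ∧ ProjDimFinite Q R')

/-! ### André–Quillen homology

`D_n(S|R, M)` is defined as the `n`-th homology of `L ⊗_S M`, where `L` is the
cotangent complex of the `R`-algebra `S`: the complex associated to the standard
simplicial resolution `X` of `S` by polynomial `R`-algebras (the comonad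
resolution `X_n = G^{n+1} S`, `G A = R[A]`), with `L_n = S ⊗_{X_n} Ω_{X_n/R}`
the free `S`-module on the variables of `X_n` and differentials the alternating
sums of the maps induced by the face maps. -/

/-- `AQV R S n` is, for `n ≥ 1`, the `n`-th ring in the standard simplicial
polynomial resolution of `S` over `R` (and `AQV R S 0 = S` as an index set). -/
def AQV (R S : Type u) [CommRing R] : ℕ → Type u
  | 0 => S
  | n+1 => MvPolynomial (AQV R S n) R

noncomputable instance (R S : Type u) [CommRing R] (n : ℕ) : CommRing (AQV R S (n+1)) :=
  inferInstanceAs (CommRing (MvPolynomial (AQV R S n) R))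

noncomputable instance (R S : Type u) [CommRing R] (n : ℕ) : Algebra R (AQV R S (n+1)) :=
  inferInstanceAs (Algebra R (MvPolynomial (AQV R S n) R))

/-- The augmentations `X_n → S` of the standard resolution. -/
def AQaug (R S : Type u) [CommRing R] [CommRing S] [Algebra R S] :
    (n : ℕ) → (AQV R S (n+1) →ₐ[R] S)
  | 0 => MvPolynomial.aeval (id : S → S)
  | n+1 => MvPolynomial.aeval (fun v : AQV R S (n+1) => AQaug R S n v)

/-- The face maps `dᵢ : X_{n+1} → X_n` of the standard resolution: `d₀` is the
counit and `d_{i+1} = G(dᵢ)`. -/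
def AQface (R S : Type u) [CommRing R] [CommRing S] [Algebra R S] :
    (n : ℕ) → (i : ℕ) → (AQV R S (n+2) →ₐ[R] AQV R S (n+1))
  | n, 0 => MvPolynomial.aeval (id : AQV R S (n+1) → AQV R S (n+1))
  | 0, _+1 => MvPolynomial.rename ⇑(AQaug R S 0)
  | n+1, i+1 => MvPolynomial.rename ⇑(AQface R S n i)

variable (R S : Type u) [CommRing R] [CommRing S] [Algebra R S]
variable (M : Type u) [AddCommGroup M] [Module S M]

/-- The map `L_{n+1} ⊗ M → L_n ⊗ M` induced by an `R`-algebra map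
`f : X_{n+1} → X_n` on the (base-changed) Kähler differentials: the free module
on the variables `v` of `X_{n+1}` maps by `e_v ↦ ∑_w aug(∂(f Xᵥ)/∂w) • e_w`. -/
def AQind (n : ℕ) (f : AQV R S (n+2) →ₐ[R] AQV R S (n+1)) :
    (AQV R S (n+1) →₀ M) →ₗ[S] (AQV R S n →₀ M) :=
  Finsupp.lsum S fun v : AQV R S (n+1) =>
    letI : DecidableEq (AQV R S n) := Classical.decEq _
    let P : MvPolynomial (AQV R S n) R := f (MvPolynomial.X v)
    ∑ w ∈ P.vars,
      (Finsupp.lsingle w).comp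
        ((AQaug R S n ((MvPolynomial.pderiv w) P) : S) • (LinearMap.id : M →ₗ[S] M))

/-- The differential `L_{n+1} ⊗ M → L_n ⊗ M` of the cotangent complex:
the alternating sum of the maps induced by the face maps. -/
def AQdiff (n : ℕ) : (AQV R S (n+1) →₀ M) →ₗ[S] (AQV R S n →₀ M) :=
  ∑ i ∈ Finset.range (n+2), ((-1 : ℤ)^i) • AQind R S M n (AQface R S n i)

/-- Cycles of the cotangent complex with coefficients in `M`. -/
def AQcycles : (n : ℕ) → Submodule S (AQV R S n →₀ M)
  | 0 => ⊤
  | n+1 => LinearMap.ker (AQdiff R S M n)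

/-- André–Quillen homology `D_n(S|R, M)`. -/
def AQH (n : ℕ) : Type u :=
  AQcycles R S M n ⧸
    (LinearMap.range (AQdiff R S M n)).comap (AQcycles R S M n).subtype

noncomputable instance (n : ℕ) : AddCommGroup (AQH R S M n) :=
  inferInstanceAs (AddCommGroup (AQcycles R S M n ⧸
    (LinearMap.range (AQdiff R S M n)).comap (AQcycles R S M n).subtype))

/-- `AQdimLE R S d`: the André–Quillen dimension of the `R`-algebra `S` is at
most `d`, i.e. `D_n(S|R, -) = 0` for all `n > d`. -/
def AQdimLE (d : ℕ) : Prop :=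
  ∀ n : ℕ, d < n → ∀ (N : Type u) (iN : AddCommGroup N) (mN : Module S N),
    Subsingleton (@AQH R S _ _ _ N iN mN n)

/-- `AQ-dim_R S < ∞`. -/
def AQdimFinite : Prop := ∃ d : ℕ, AQdimLE R S d

/-! ### Koszul homology `H₁` -/

/-- First differential of the Koszul complex on `x : Fin c → A`. -/
def koszulD1 (A : Type u) [CommRing A] {c : ℕ} (x : Fin c → A) : (Fin c → A) →ₗ[A] A :=
  ∑ i, x i • (LinearMap.proj i : ((Fin c → A)) →ₗ[A] A)

/-- One-cycles of the Koszul complex on `x`. -/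
def koszulZ1 (A : Type u) [CommRing A] {c : ℕ} (x : Fin c → A) : Submodule A (Fin c → A) :=
  LinearMap.ker (koszulD1 A x)

/-- One-boundaries of the Koszul complex on `x` (the image of the second Koszul
differential, spanned by the elements `xᵢ eⱼ - xⱼ eᵢ`). -/
def koszulB1 (A : Type u) [CommRing A] {c : ℕ} (x : Fin c → A) : Submodule A (Fin c → A) :=
  Submodule.span A
    {v : Fin c → A | ∃ i j, v =
      x i • (Pi.single j (1 : A) : Fin c → A) - x j • (Pi.single i (1 : A) : Fin c → A)}

/-- First Koszul homology of the sequence `x : Fin c → A`. -/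
def KoszulH1 (A : Type u) [CommRing A] {c : ℕ} (x : Fin c → A) : Type u :=
  koszulZ1 A x ⧸ (koszulB1 A x).comap (koszulZ1 A x).subtype

noncomputable instance (A : Type u) [CommRing A] {c : ℕ} (x : Fin c → A) :
    AddCommGroup (KoszulH1 A x) :=
  inferInstanceAs (AddCommGroup (koszulZ1 A x ⧸ (koszulB1 A x).comap (koszulZ1 A x).subtype))

noncomputable instance (A : Type u) [CommRing A] {c : ℕ} (x : Fin c → A) :
    Module A (KoszulH1 A x) :=
  inferInstanceAs (Module A (koszulZ1 A x ⧸ (koszulB1 A x).comap (koszulZ1 A x).subtype))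

/-- `H₁(K(σ))` is a free `T̂`-module:  for any Cohen factorization
`S → S'' → T̂` of the semi-completion of `σ` and any finite generating set `x` of
`ker (S'' → T̂)`, the first Koszul homology of `x`, base-changed to `T̂`
(it is killed by `ker (S'' → T̂)`), is a free `T̂`-module. -/
def KoszulH1FreeHom (S T : Type u) [CommRing S] [CommRing T] [IsLocalRing S] [IsLocalRing T]
    (σ : S →+* T) : Prop :=
  ∀ (S'' : Type u) (_ : CommRing S'') (f : S →+* S'')
    (g : S'' →+* AdicCompletion (maximalIdeal T) T),
    IsCohenFactorizationAt S T σ (maximalIdeal T) S'' f g →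
    ∀ (c : ℕ) (x : Fin c → S''), Ideal.span (Set.range x) = RingHom.ker g →
      (letI := g.toAlgebra;
       Module.Free (AdicCompletion (maximalIdeal T) T)
         ((AdicCompletion (maximalIdeal T) T) ⊗[S''] (KoszulH1 S'' x)))

/-! ### Separability (MacLane) -/

/-- A field extension `ℓ/k` is separable (in the sense of MacLane, allowing
non-algebraic extensions) iff `K ⊗_k ℓ` is reduced for every field extension `K/k`. -/
def IsSeparableFieldExtension (k ℓ : Type u) [Field k] [Field ℓ] [Algebra k ℓ] : Prop :=
  ∀ (K : Type u) (_ : Field K) (_ : Algebra k K), IsReduced (K ⊗[k] ℓ)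

end

namespace CIAscent
open RingTheory.Sequence

lemma span_eq_ofList {A : Type*} [CommRing A] (rs : List A) :
    Ideal.span {x | x ∈ rs} = Ideal.ofList rs := rfl

lemma mem_max_of_isRegular {A : Type*} [CommRing A] [IsLocalRing A] {rs : List A}
    (h : IsRegular A rs) : Ideal.ofList rs ≤ maximalIdeal A := by
  apply IsLocalRing.le_maximalIdeal
  intro h'
  apply h.2
  rw [h']; simp

lemma isRegular_of_weakly {A : Type*} [CommRing A] [IsLocalRing A] {rs : List A}
    (h : IsWeaklyRegular A rs) (h' : Ideal.ofList rs ≤ maximalIdeal A) : IsRegular A rs :=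
  (IsLocalRing.isRegular_iff_isWeaklyRegular_of_subset_maximalIdeal
    (fun _ hr => h' (Ideal.subset_span hr))).2 h

lemma ofList_perm' {A : Type*} [CommRing A] {l l' : List A} (h : l.Perm l') :
    Ideal.ofList l = Ideal.ofList l' := by
  unfold Ideal.ofList; congr 1; ext x; exact h.mem_iff

/-- Replace the head of a regular sequence. -/
lemma replace_head {A : Type*} [CommRing A] [IsLocalRing A] [IsNoetherianRing A]
    {f z a s : A} {l : List A} (h : IsRegular A (f :: l)) (ha : IsUnit a)
    (hs : s ∈ Ideal.ofList l) (hz : z = a * f + s) :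
    IsRegular A (z :: l) ∧ Ideal.ofList (z :: l) = Ideal.ofList (f :: l) := by
  have hI : Ideal.ofList (z :: l) = Ideal.ofList (f :: l) := by
    simp only [Ideal.ofList_cons]
    apply le_antisymm
    · refine sup_le ?_ le_sup_right
      rw [Ideal.span_singleton_le_iff_mem, hz]
      exact add_mem (Ideal.mem_sup_left (Ideal.mul_mem_left _ _ (Ideal.mem_span_singleton_self f)))
        (Ideal.mem_sup_right hs)
    · refine sup_le ?_ le_sup_right
      rw [Ideal.span_singleton_le_iff_mem]
      obtain ⟨b, hb⟩ := ha.exists_left_inv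
      have : f = b * z - b * s := by rw [hz]; linear_combination (-f) * hb
      rw [this]
      exact sub_mem (Ideal.mem_sup_left (Ideal.mul_mem_left _ _ (Ideal.mem_span_singleton_self z)))
        (Ideal.mem_sup_right (Ideal.mul_mem_left _ _ hs))
  refine ⟨?_, hI⟩
  have hm := mem_max_of_isRegular h
  have h1 : IsRegular A (l ++ [f]) :=
    IsLocalRing.isRegular_of_perm h (List.perm_append_singleton f l).symm
  have h2 : IsWeaklyRegular A (l ++ [z]) := by
    have := h1.1
    rw [isWeaklyRegular_append_iff, isWeaklyRegular_singleton_iff] at this ⊢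
    refine ⟨this.1, ?_⟩
    have key : ∀ x : A ⧸ (Ideal.ofList l • ⊤ : Submodule A A), z • x = a • f • x := by
      intro x
      induction x using Submodule.Quotient.induction_on with
      | H x =>
        rw [smul_smul, ← Submodule.Quotient.mk_smul, ← Submodule.Quotient.mk_smul,
          Submodule.Quotient.eq]
        have : z • x - (a * f) • x = s • x := by rw [hz]; simp only [smul_eq_mul]; ring
        rw [this]
        exact Submodule.smul_mem_smul hs trivial
    intro x y hxy
    simp only [key] at hxy
    exact this.2 (ha.isSMulRegular _ hxy)
  refine IsLocalRing.isRegular_of_perm (isRegular_of_weakly h2 ?_) (List.perm_append_singleton z l)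
  refine le_trans (le_of_eq ?_) (hI.le.trans hm)
  exact ofList_perm' (List.perm_append_singleton z l)

lemma mem_ofList_cons {A : Type*} [CommRing A] {f z : A} {l : List A}
    (h : z ∈ Ideal.ofList (f :: l)) : ∃ a s, s ∈ Ideal.ofList l ∧ z = a * f + s := by
  rw [Ideal.ofList_cons, Submodule.mem_sup] at h
  obtain ⟨y, hy, s, hs, rfl⟩ := h
  obtain ⟨a, rfl⟩ := Ideal.mem_span_singleton'.1 hy
  exact ⟨a, s, hs, rfl⟩

/-- if `z` is in the ideal but not in `m I` then some generator can be exchanged. -/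
lemma exists_unit_coeff {A : Type*} [CommRing A] [IsLocalRing A] 
    {z : A} {l : List A} (hz : z ∈ Ideal.ofList l)
    (hz' : z ∉ maximalIdeal A * Ideal.ofList l) :
    ∃ f l' a s, l.Perm (f :: l') ∧ IsUnit a ∧ s ∈ Ideal.ofList l' ∧ z = a * f + s := by
  induction l generalizing z with
  | nil => 
    exfalso; apply hz'
    simp only [Ideal.ofList_nil] at hz ⊢
    rw [Ideal.mem_bot.1 hz]; exact zero_mem _
  | cons f l ih =>
    obtain ⟨a, s, hs, hz1⟩ := mem_ofList_cons hz
    by_cases ha : IsUnit a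
    · exact ⟨f, l, a, s, List.Perm.refl _, ha, hs, hz1⟩
    · have hs' : s ∉ maximalIdeal A * Ideal.ofList l := by
        intro h
        apply hz'
        rw [hz1]
        refine add_mem (Ideal.mul_mem_mul ((mem_maximalIdeal a).2 ha)
          (Ideal.subset_span (by simp))) (Ideal.mul_mono le_rfl ?_ h)
        rw [Ideal.ofList_cons]; exact le_sup_right
      obtain ⟨g, l', b, t, hp, hb, ht, hst⟩ := ih hs hs'
      refine ⟨g, f :: l', b, a * f + t, ?_, hb, ?_, ?_⟩
      · exact (hp.cons f).trans (List.Perm.swap _ _ _)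
      · rw [Ideal.ofList_cons]
        exact add_mem (Ideal.mem_sup_left (Ideal.mul_mem_left _ _ (Ideal.mem_span_singleton_self f)))
          (Ideal.mem_sup_right ht)
      · rw [hz1, hst]; ring

lemma ofList_perm {A : Type*} [CommRing A] {l l' : List A} (h : l.Perm l') :
    Ideal.ofList l = Ideal.ofList l' := by
  unfold Ideal.ofList; congr 1; ext x; exact h.mem_iff

lemma exchange {A : Type*} [CommRing A] [IsLocalRing A] [IsNoetherianRing A]
    {z : A} {l : List A} (h : IsRegular A l) (hz : z ∈ Ideal.ofList l)
    (hz' : z ∉ maximalIdeal A * Ideal.ofList l) :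
    ∃ l', IsRegular A (z :: l') ∧ Ideal.ofList (z :: l') = Ideal.ofList l ∧
      l'.length + 1 = l.length := by
  obtain ⟨f, l', a, s, hp, ha, hs, e⟩ := exists_unit_coeff hz hz'
  have := replace_head (IsLocalRing.isRegular_of_perm h hp) ha hs e
  exact ⟨l', this.1, this.2.trans (ofList_perm hp).symm, by simpa using hp.length_eq.symm⟩

/-- perturb elements of a regular sequence by elements of `m I`. -/
lemma perturb {A : Type*} [CommRing A] [IsLocalRing A] [IsNoetherianRing A]
    (l l' l0 : List A) (h : IsRegular A (l0 ++ l))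
    (hl : List.Forall₂ (fun f g => g - f ∈ maximalIdeal A * Ideal.ofList (l0 ++ l)) l l') :
    IsRegular A (l0 ++ l') ∧ Ideal.ofList (l0 ++ l') = Ideal.ofList (l0 ++ l) := by
  induction l generalizing l' l0 with
  | nil => cases hl; exact ⟨h, rfl⟩
  | cons f l ih =>
    cases hl with
    | @cons _ g _ l'' hfg hl =>
    have hp : (l0 ++ f :: l).Perm (f :: (l0 ++ l)) := List.perm_middle
    have hp' : (l0 ++ [g] ++ l).Perm (g :: (l0 ++ l)) := by
      rw [List.append_assoc]; exact List.perm_middle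
    have h1 := IsLocalRing.isRegular_of_perm h hp
    have hI := ofList_perm hp
    have : ∃ a s, IsUnit a ∧ s ∈ Ideal.ofList (l0 ++ l) ∧ g = a * f + s := by
      rw [hI, Ideal.ofList_cons, mul_comm, Ideal.sup_mul, Submodule.mem_sup] at hfg
      obtain ⟨y, hy, s, hs, e⟩ := hfg
      obtain ⟨b, hb, rfl⟩ := Ideal.mem_span_singleton_mul.1 hy
      have hs' : s ∈ Ideal.ofList (l0 ++ l) :=
        Ideal.mul_le_left (I := Ideal.ofList (l0 ++ l)) (J := maximalIdeal A) hs
      refine ⟨1 + b, s, ?_, hs', ?_⟩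
      · by_contra hu
        have : (1 + b) - b ∈ maximalIdeal A := sub_mem ((mem_maximalIdeal _).2 hu) hb
        simp at this
      · linear_combination -e
    obtain ⟨a, s, ha, hs, e⟩ := this
    obtain ⟨h2, h3⟩ := replace_head h1 ha hs e
    have h4 := IsLocalRing.isRegular_of_perm h2 hp'.symm
    have h5 : Ideal.ofList (l0 ++ [g] ++ l) = Ideal.ofList (l0 ++ f :: l) := by
      rw [ofList_perm hp', h3, hI]
    have := ih l'' (l0 ++ [g]) h4 (by rw [h5]; exact hl)
    rw [h5] at this
    simpa using this

end CIAscent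

namespace CIAscent
open RingTheory.Sequence

lemma weaklyRegular_surj {E F : Type*} [CommRing E] [CommRing F] (ψ : E →+* F)
    (hψ : Function.Surjective ψ) (I : Ideal E) (hI : RingHom.ker ψ = I) (l : List E) :
    IsWeaklyRegular (E ⧸ I) l ↔ IsWeaklyRegular F (l.map ψ) := by
  subst hI
  let e := RingHom.quotientKerEquivOfSurjective hψ
  refine AddEquiv.isWeaklyRegular_congr (e := e.toAddEquiv) ?_
  rw [List.forall₂_map_right_iff, List.forall₂_same]
  intro r _ x
  obtain ⟨x, rfl⟩ := Ideal.Quotient.mk_surjective x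
  change e (Ideal.Quotient.mk _ (r * x)) = ψ r * e (Ideal.Quotient.mk _ x)
  simp [e]

lemma append_surj {E F : Type*} [CommRing E] [CommRing F] (ψ : E →+* F)
    (hψ : Function.Surjective ψ) (l₁ l₂ : List E) (hI : RingHom.ker ψ = Ideal.ofList l₁) :
    IsWeaklyRegular E (l₁ ++ l₂) ↔ IsWeaklyRegular E l₁ ∧ IsWeaklyRegular F (l₂.map ψ) := by
  rw [isWeaklyRegular_append_iff, ← weaklyRegular_surj ψ hψ _ hI]
  have e : (Ideal.ofList l₁ • ⊤ : Submodule E E) = Ideal.ofList l₁ := by simp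
  exact and_congr_right fun _ => (Submodule.quotEquivOfEq _ _ e).isWeaklyRegular_congr _

lemma map_ofList {E F : Type*} [CommRing E] [CommRing F] (ψ : E →+* F) (l : List E) :
    (Ideal.ofList l).map ψ = Ideal.ofList (l.map ψ) := Ideal.map_ofList _ _

lemma exists_map_eq {E F : Type*} (ψ : E → F) (hψ : Function.Surjective ψ) (l : List F) :
    ∃ l' : List E, l'.map ψ = l := by
  exact ⟨l.map (Function.surjInv hψ), by simp [Function.comp_def, Function.surjInv_eq hψ]⟩

lemma ker_comp_eq {E F G : Type*} [CommRing E] [CommRing F] [CommRing G] (ψ : E →+* F)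
    (hψ : Function.Surjective ψ) (χ : F →+* G) (l₁ l₂ : List E)
    (h₁ : RingHom.ker ψ = Ideal.ofList l₁) (h₂ : RingHom.ker χ = Ideal.ofList (l₂.map ψ)) :
    RingHom.ker (χ.comp ψ) = Ideal.ofList (l₁ ++ l₂) := by
  rw [← RingHom.comap_ker, h₂, ← map_ofList, Ideal.comap_map_of_surjective _ hψ, sup_comm,
    Ideal.ofList_append, ← h₁]
  rfl

/-- composite of surjections with kernels generated by regular sequences -/
lemma weaklyRegular_comp {E F G : Type*} [CommRing E] [CommRing F] [CommRing G] (ψ : E →+* F)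
    (hψ : Function.Surjective ψ) (χ : F →+* G) (l₁ l₂ : List E)
    (h₁ : RingHom.ker ψ = Ideal.ofList l₁) (h₂ : RingHom.ker χ = Ideal.ofList (l₂.map ψ))
    (w₁ : IsWeaklyRegular E l₁) (w₂ : IsWeaklyRegular F (l₂.map ψ)) :
    IsWeaklyRegular E (l₁ ++ l₂) ∧ RingHom.ker (χ.comp ψ) = Ideal.ofList (l₁ ++ l₂) :=
  ⟨(append_surj ψ hψ l₁ l₂ h₁).2 ⟨w₁, w₂⟩, ker_comp_eq ψ hψ χ l₁ l₂ h₁ h₂⟩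

/-- `K ∩ (t) = t K` for `t` regular on the quotient. -/
lemma ker_le_of_regular {E T : Type u} [CommRing E] [CommRing T] (φ : E →+* T)
    (hφ : Function.Surjective φ) (t : List E) (ht : IsWeaklyRegular T (t.map φ))
    (hK : RingHom.ker φ ≤ Ideal.ofList t) : RingHom.ker φ ≤ Ideal.ofList t * RingHom.ker φ := by
  letI := φ.toAlgebra
  have ht' : IsWeaklyRegular T t := by
    rw [← isWeaklyRegular_map_algebraMap_iff (S := T)]; exact ht
  let K := RingHom.ker φ
  let f₁ : PUnit.{u+1} →ₗ[E] K := 0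
  let f₂ : K →ₗ[E] E := Submodule.subtype K
  let f₃ : E →ₗ[E] T := Algebra.linearMap E T
  have h12 : Function.Exact f₁ f₂ := by
    intro x
    constructor
    · intro h; exact ⟨0, Subtype.ext h.symm⟩
    · rintro ⟨y, rfl⟩; simp [f₁]
  have h23 : Function.Exact f₂ f₃ := by
    intro x
    constructor
    · intro h; exact ⟨⟨x, h⟩, rfl⟩
    · rintro ⟨y, rfl⟩; exact y.2
  have := map_first_exact_on_four_term_right_exact_of_isSMulRegular_last (rs := t) h12 h23 hφ ht'
  intro x hx
  have h0 := (this (Submodule.Quotient.mk ⟨x, hx⟩)).1 (by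
    rw [Submodule.mapQ_apply, Submodule.Quotient.mk_eq_zero]
    change x ∈ _
    simpa using hK hx)
  obtain ⟨y, hy⟩ := h0
  obtain ⟨y, rfl⟩ := Submodule.Quotient.mk_surjective _ y
  rw [Submodule.mapQ_apply] at hy
  have h1 : (⟨x, hx⟩ : K) ∈ (Ideal.ofList t • ⊤ : Submodule E K) := by
    rw [← Submodule.Quotient.mk_eq_zero, ← hy]
    have : f₁ y = 0 := rfl
    rw [this]; rfl
  have h2 := Submodule.mem_map_of_mem (f := Submodule.subtype K) h1
  rw [Submodule.map_smul''] at h2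
  simpa using h2

lemma regular_surj (d : ℕ) : ∀ (E T : Type u) [CommRing E] [CommRing T] [IsLocalRing E]
    [IsLocalRing T] [IsNoetherianRing E] (φ : E →+* T), Function.Surjective φ →
    ∀ (u : List E) (t : List T), IsRegular E u → Ideal.ofList u = maximalIdeal E →
    u.length = d → IsRegular T t → Ideal.ofList t = maximalIdeal T →
    ∃ z, IsRegular E z ∧ Ideal.ofList z = RingHom.ker φ := by
  induction d with
  | zero =>
    intro E T _ _ _ _ _ φ hφ u t hu hum hd ht htm
    obtain rfl := List.length_eq_zero_iff.1 hd
    refine ⟨[], IsRegular.nil _ _, ?_⟩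
    refine le_antisymm (by simp) ?_
    · rw [hum]; exact IsLocalRing.le_maximalIdeal (RingHom.ker_ne_top φ)
  | succ d ih =>
    intro E T _ _ _ _ _ φ hφ u t hu hum hd ht htm
    have hKm : RingHom.ker φ ≤ maximalIdeal E := IsLocalRing.le_maximalIdeal (RingHom.ker_ne_top φ)
    by_cases hK : RingHom.ker φ ≤ maximalIdeal E * maximalIdeal E
    · refine ⟨[], IsRegular.nil _ _, ?_⟩
      rw [Ideal.ofList_nil]; symm
      obtain ⟨t', rfl⟩ := exists_map_eq φ hφ t
      haveI : IsLocalHom φ := hφ.isLocalHom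
      have h1 : Ideal.ofList t' = maximalIdeal E := by
        apply le_antisymm
        · have : maximalIdeal E = (maximalIdeal T).comap φ :=
            (IsLocalRing.maximalIdeal_comap φ).symm
          rw [this, ← htm, ← map_ofList]; exact Ideal.le_comap_map
        · apply Submodule.le_of_le_smul_of_le_jacobson_bot (I := maximalIdeal E)
            (IsNoetherian.noetherian _) (IsLocalRing.maximalIdeal_le_jacobson _)
          calc maximalIdeal E ≤ (maximalIdeal T).comap φ :=
                (IsLocalRing.maximalIdeal_comap φ).ge
            _ = Ideal.ofList t' ⊔ RingHom.ker φ := by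
                rw [← htm, ← map_ofList, Ideal.comap_map_of_surjective _ hφ]; rfl
            _ ≤ _ := sup_le_sup_left hK _
      have h2 := ker_le_of_regular φ hφ t' ht.1 (h1 ▸ hKm)
      rw [h1] at h2
      exact Submodule.eq_bot_of_le_smul_of_le_jacobson_bot (maximalIdeal E) _
        (IsNoetherian.noetherian _) h2 (IsLocalRing.maximalIdeal_le_jacobson _)
    · obtain ⟨z, hz, hz'⟩ := SetLike.not_le_iff_exists.1 hK
      have hzm := hKm hz
      obtain ⟨l, hl, hlm, hlen⟩ := exchange hu (hum ▸ hzm) (hum ▸ hz')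
      let I := Ideal.ofList [z]
      have hI : I ≤ RingHom.ker φ := by
        simp only [I, Ideal.ofList_singleton]; rwa [Ideal.span_singleton_le_iff_mem]
      have hIm : I ≠ ⊤ := fun h => RingHom.ker_ne_top φ (top_le_iff.1 (h ▸ hI))
      haveI : Nontrivial (E ⧸ I) := Ideal.Quotient.nontrivial_iff.2 hIm
      haveI : IsLocalRing (E ⧸ I) := IsLocalRing.of_surjective' _ Ideal.Quotient.mk_surjective
      let ψ := Ideal.Quotient.mk I
      have hψ : Function.Surjective ψ := Ideal.Quotient.mk_surjective
      have hkψ : RingHom.ker ψ = I := Ideal.mk_ker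
      haveI : IsLocalHom ψ := hψ.isLocalHom
      let χ : E ⧸ I →+* T := Ideal.Quotient.lift I φ hI
      have hχ : χ.comp ψ = φ := RingHom.ext fun x => Ideal.Quotient.lift_mk I φ hI
      have hχs : Function.Surjective χ := fun y => by
        obtain ⟨x, rfl⟩ := hφ y; exact ⟨ψ x, by rw [← hχ]; rfl⟩
      have hw := (append_surj ψ hψ [z] l hkψ).1 hl.1
      have hmax : Ideal.ofList (l.map ψ) = maximalIdeal (E ⧸ I) := by
        rw [← IsLocalRing.map_maximalIdeal_of_surjective ψ hψ, ← hum, ← hlm, map_ofList]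
        simp only [List.map_cons, Ideal.ofList_cons]
        have : ψ z = 0 := Ideal.Quotient.eq_zero_iff_mem.2 (Ideal.subset_span (by simp))
        rw [this]; simp
      obtain ⟨w, hwr, hwk⟩ := ih (E ⧸ I) T χ hχs (l.map ψ) t (isRegular_of_weakly hw.2 hmax.le)
        hmax (by simp; omega) ht htm
      obtain ⟨w, rfl⟩ := exists_map_eq ψ hψ w
      obtain ⟨h1, h2⟩ := weaklyRegular_comp ψ hψ χ [z] w hkψ hwk.symm hw.1 hwr.1
      rw [hχ] at h2
      exact ⟨_, isRegular_of_weakly h1 (h2 ▸ hKm), h2.symm⟩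

end CIAscent

namespace CIAscent
open RingTheory.Sequence

lemma krull_closed {E : Type*} [CommRing E] [IsLocalRing E] [IsNoetherianRing E] (J : Ideal E)
    {x : E} (h : ∀ n : ℕ, x ∈ J ⊔ maximalIdeal E ^ n) : x ∈ J := by
  have := Ideal.iInf_pow_smul_eq_bot_of_isLocalRing (M := E ⧸ J) (maximalIdeal E)
    (IsLocalRing.maximalIdeal.isMaximal E).ne_top
  rw [← Ideal.Quotient.eq_zero_iff_mem, ← Submodule.mem_bot E, ← this, Submodule.mem_iInf]
  intro n
  obtain ⟨j, hj, y, hy, rfl⟩ := Submodule.mem_sup.1 (h n)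
  have h0 : (Ideal.Quotient.mk J) (j + y) = y • (1 : E ⧸ J) := by
    rw [map_add, Ideal.Quotient.eq_zero_iff_mem.2 hj, zero_add]
    simp [Algebra.smul_def]
  rw [h0]
  exact Submodule.smul_mem_smul hy trivial

lemma weak_iff {E : Type*} [CommRing E] (I : Ideal E) (l : List E) :
    IsWeaklyRegular (E ⧸ I) l ↔ ∀ (i : ℕ) (h : i < l.length) (e : E),
      l[i] * e ∈ Ideal.ofList (l.take i) ⊔ I → e ∈ Ideal.ofList (l.take i) ⊔ I := by
  have key : ∀ (J : Ideal E) (e : E),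
      (Ideal.Quotient.mk I e) ∈ (J • ⊤ : Submodule E (E ⧸ I)) ↔ e ∈ J ⊔ I := by
    intro J e
    have : (J • ⊤ : Submodule E (E ⧸ I)) = Submodule.map I.mkQ J := by
      have h := Submodule.map_smul'' J (⊤ : Submodule E E) I.mkQ
      rw [Submodule.map_top, Submodule.range_mkQ] at h
      rw [← h]; simp
    rw [this]
    constructor
    · rintro ⟨y, hy, hye⟩
      have : e - y ∈ I := by
        rw [← Ideal.Quotient.eq_zero_iff_mem, map_sub, sub_eq_zero]; exact hye.symm
      have := Submodule.add_mem_sup hy this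
      simpa using this
    · intro h
      obtain ⟨y, hy, z, hz, rfl⟩ := Submodule.mem_sup.1 h
      refine ⟨y, hy, ?_⟩
      rw [map_add, Ideal.Quotient.eq_zero_iff_mem.2 hz, add_zero]; rfl
  rw [isWeaklyRegular_iff]
  refine forall_congr' fun i => forall_congr' fun hi => ?_
  rw [isSMulRegular_iff_right_eq_zero_of_smul]
  constructor
  · intro h e he
    rw [← key] at he ⊢
    rw [← Submodule.Quotient.mk_eq_zero] at he ⊢
    exact h _ he
  · intro h x
    obtain ⟨x, rfl⟩ := Submodule.Quotient.mk_surjective _ x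
    obtain ⟨x, rfl⟩ := Ideal.Quotient.mk_surjective x
    intro hx
    rw [Submodule.Quotient.mk_eq_zero]
    rw [key]
    apply h
    rw [← key, ← Submodule.Quotient.mk_eq_zero]
    exact hx

lemma weakly_of_bot {E : Type*} [CommRing E] (l : List E) :
    IsWeaklyRegular E l ↔ IsWeaklyRegular (E ⧸ (⊥ : Ideal E)) l :=
  ((Submodule.quotEquivOfEqBot (⊥ : Ideal E) rfl).isWeaklyRegular_congr l).symm

lemma weakly_ext {E : Type*} [CommRing E] (l : List E) : ∀ {A B C : Type u} [AddCommGroup A]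
    [AddCommGroup B] [AddCommGroup C] [Module E A] [Module E B] [Module E C]
    (f : A →ₗ[E] B) (g : B →ₗ[E] C), Function.Injective f → Function.Exact f g →
    Function.Surjective g → IsWeaklyRegular A l → IsWeaklyRegular C l → IsWeaklyRegular B l := by
  induction l with
  | nil => intros; exact IsWeaklyRegular.nil _ _
  | cons r l ih =>
    intro A B C _ _ _ _ _ _ f g hf hfg hg hA hC
    rw [isWeaklyRegular_cons_iff] at hA hC ⊢
    refine ⟨isSMulRegular_of_range_eq_ker hf hfg.linearMap_ker_eq.symm hA.1 hC.1, ?_⟩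
    refine ih (QuotSMulTop.map r f) (QuotSMulTop.map r g) ?_ (QuotSMulTop.map_exact r hfg hg)
      (QuotSMulTop.map_surjective r hg) hA.2 hC.2
    have h0 : Function.Exact (0 : PUnit.{u+1} →ₗ[E] A) f := by
      intro x
      constructor
      · intro hx; exact ⟨0, (((map_eq_zero_iff f hf).1 hx)).symm⟩
      · rintro ⟨y, rfl⟩; simp
    have := QuotSMulTop.map_first_exact_on_four_term_exact_of_isSMulRegular_last (r := r)
      h0 hfg hC.1
    rw [map_zero] at this
    rw [injective_iff_map_eq_zero]
    intro a ha
    obtain ⟨y, hy⟩ := (this a).1 ha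
    exact hy.symm

section
variable {R E : Type u} [CommRing R] [CommRing E] [IsLocalRing R] [IsLocalRing E]
    [IsNoetherianRing R] [IsNoetherianRing E] [Algebra R E] [Module.Flat R E]
    [IsLocalHom (algebraMap R E)]

lemma weakly_tensor (l : List E)
    (hl : IsWeaklyRegular (E ⧸ (maximalIdeal R).map (algebraMap R E)) l) (N : Type u)
    [AddCommGroup N] [Module R N] [hN : Module.Finite R N]
    (h : ∃ n, ∀ r ∈ maximalIdeal R ^ n, ∀ x : N, r • x = 0) : IsWeaklyRegular (E ⊗[R] N) l := by
  revert h
  refine IsNoetherianRing.induction_on_isQuotientEquivQuotientPrime R hN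
    (motive := fun N _ _ _ => (∃ n, ∀ r ∈ maximalIdeal R ^ n, ∀ x : N, r • x = 0) →
      IsWeaklyRegular (E ⊗[R] N) l) ?_ ?_ ?_
  · intro N _ _ _ _ _
    have : Subsingleton (E ⊗[R] N) := inferInstance
    rw [isWeaklyRegular_iff]
    intro i hi
    intro x y _
    obtain ⟨x, rfl⟩ := Submodule.Quotient.mk_surjective _ x
    obtain ⟨y, rfl⟩ := Submodule.Quotient.mk_surjective _ y
    rw [Subsingleton.elim x y]
  · rintro N _ _ _ ⟨p, hp⟩ e ⟨n, hn⟩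
    have hpm : p = maximalIdeal R := by
      apply le_antisymm (IsLocalRing.le_maximalIdeal hp.ne_top)
      apply Ideal.IsPrime.le_of_pow_le (n := n)
      intro r hr
      have := hn r hr (e.symm 1)
      rw [← map_smul, map_eq_zero_iff _ e.symm.injective] at this
      rw [← Ideal.Quotient.eq_zero_iff_mem]
      simpa [Algebra.smul_def] using this
    subst hpm
    have e1 : E ⊗[R] N ≃ₗ[E] E ⊗[R] (R ⧸ maximalIdeal R) :=
      TensorProduct.AlgebraTensorModule.congr (LinearEquiv.refl E E) e
    have e2 := (Algebra.TensorProduct.quotIdealMapEquivTensorQuot E (maximalIdeal R)).toLinearEquiv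
    exact ((e1.trans e2.symm).isWeaklyRegular_congr l).2 hl
  · intro N₁ _ _ _ N₂ _ _ _ N₃ _ _ _ f g hf hg hfg h1 h3 ⟨n, hn⟩
    refine weakly_ext l (AlgebraTensorModule.map (LinearMap.id : E →ₗ[E] E) f)
      (AlgebraTensorModule.map (LinearMap.id : E →ₗ[E] E) g)
      (Module.Flat.lTensor_preserves_injective_linearMap f hf) (lTensor_exact E hfg hg)
      (LinearMap.lTensor_surjective E hg) (h1 ⟨n, ?_⟩) (h3 ⟨n, ?_⟩)
    · intro r hr x; apply hf; rw [map_smul, hn r hr, map_zero]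
    · intro r hr x; obtain ⟨x, rfl⟩ := hg x; rw [← map_smul, hn r hr, map_zero]

lemma weakly_lift (l : List E)
    (hl : IsWeaklyRegular (E ⧸ (maximalIdeal R).map (algebraMap R E)) l) :
    IsWeaklyRegular E l := by
  rw [weakly_of_bot, weak_iff]
  intro i hi e he
  rw [sup_bot_eq] at he ⊢
  apply krull_closed
  intro n
  have h := weakly_tensor l hl (R ⧸ maximalIdeal R ^ n) ⟨n, fun r hr x => by
    obtain ⟨x, rfl⟩ := Ideal.Quotient.mk_surjective x
    rw [Algebra.smul_def, Ideal.Quotient.algebraMap_eq, Ideal.Quotient.eq_zero_iff_mem.2 hr,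
      zero_mul]⟩
  have h' := ((Algebra.TensorProduct.quotIdealMapEquivTensorQuot E
    (maximalIdeal R ^ n)).toLinearEquiv.isWeaklyRegular_congr l).2 h
  rw [weak_iff] at h'
  have := h' i hi e (Ideal.mem_sup_left he)
  refine (sup_le_sup_left ?_ (Ideal.ofList (l.take i)) : _ ≤ _) this
  rw [Ideal.map_pow]
  exact Ideal.pow_right_mono (((local_hom_TFAE (algebraMap R E)).out 0 2).1 ‹_›) n
end

lemma ker_inf_le {R E T : Type*} [CommRing R] [CommRing E] [CommRing T] [Algebra R E]
    [Algebra R T] [Module.Flat R T] (φ : E →ₐ[R] T) (hφ : Function.Surjective φ) (I : Ideal R) :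
    RingHom.ker φ ⊓ I.map (algebraMap R E) ≤ I.map (algebraMap R E) * RingHom.ker φ := by
  rintro x ⟨hx, hxI⟩
  have : ∃ (n : ℕ) (a : Fin n → R) (e : Fin n → E), (∀ i, a i ∈ I) ∧ x = ∑ i, a i • e i := by
    obtain ⟨n, f, g, h⟩ := Submodule.mem_span_set'.1 hxI
    choose a ha ha' using fun i => (g i).2
    exact ⟨n, a, f, ha, by rw [← h]; simp [Algebra.smul_def, ha', mul_comm]⟩
  obtain ⟨n, a, e, ha, rfl⟩ := this
  have h0 : ∑ i, a i • φ (e i) = 0 := by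
    have : φ (∑ i, a i • e i) = 0 := hx
    simpa using this
  obtain ⟨k, c, y, h1, h2⟩ := Module.Flat.isTrivialRelation_of_sum_smul_eq_zero (R := R) (M := T) h0
  choose y' hy' using fun j => hφ (y j)
  have h3 : ∑ i, a i • e i = ∑ i, algebraMap R E (a i) * (e i - ∑ j, c i j • y' j) := by
    simp only [mul_sub, Finset.sum_sub_distrib, ← Algebra.smul_def, Finset.smul_sum]
    rw [Finset.sum_comm (f := fun i j => a i • c i j • y' j)]
    simp only [smul_smul, ← Finset.sum_smul, h2]
    simp
  rw [h3]
  refine Ideal.sum_mem _ fun i _ => Ideal.mul_mem_mul (Ideal.mem_map_of_mem _ (ha i)) ?_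
  beta_reduce at h1
  rw [RingHom.mem_ker, map_sub, h1 i]
  simp [hy']

end CIAscent

namespace CIAscent
open RingTheory.Sequence

lemma localRingHom_surj {B C : Type u} [CommRing B] [CommRing C] (f : B →+* C)
    (hf : Function.Surjective f) (p : Ideal B) [p.IsPrime] (q : Ideal C) [q.IsPrime]
    (h : p = q.comap f) : Function.Surjective (Localization.localRingHom p q f h) ∧
      RingHom.ker (Localization.localRingHom p q f h) =
        (RingHom.ker f).map (algebraMap B (Localization.AtPrime p)) := by
  subst h
  refine ⟨RingHom.surjective_localRingHom_of_surjective f hf q, ?_⟩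
  refine IsLocalization.ker_map (S := Localization.AtPrime (q.comap f))
    (M := (q.comap f).primeCompl) (T := q.primeCompl) (Localization.AtPrime q) f ?_
  ext x
  constructor
  · rintro ⟨y, hy, rfl⟩; exact hy
  · intro hx; obtain ⟨y, rfl⟩ := hf x; exact ⟨y, hx, rfl⟩

def RegMax (A : Type u) [CommRing A] [IsLocalRing A] : Prop :=
  ∃ l : List A, IsWeaklyRegular A l ∧ Ideal.ofList l = maximalIdeal A

def RegAll (A : Type u) [CommRing A] : Prop :=
  ∀ (p : Ideal A) [p.IsPrime], RegMax (Localization.AtPrime p)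

lemma weakly_ringEquiv {A B : Type*} [CommRing A] [CommRing B] (e : A ≃+* B) (l : List A) 
    (h : IsWeaklyRegular A l) : IsWeaklyRegular B (l.map e) := by
  refine (AddEquiv.isWeaklyRegular_congr (e := e.toAddEquiv) ?_).1 h
  rw [List.forall₂_map_right_iff, List.forall₂_same]
  intro r _ x
  exact map_mul e r x

lemma RegMax.of_equiv {A B : Type u} [CommRing A] [CommRing B] [IsLocalRing A] [IsLocalRing B]
    (e : A ≃+* B) (h : RegMax A) : RegMax B := by
  obtain ⟨l, h1, h2⟩ := h
  refine ⟨l.map e, weakly_ringEquiv e l h1, ?_⟩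
  have := IsLocalRing.map_maximalIdeal_of_surjective (e : A →+* B) e.surjective
  rw [← this, ← h2, map_ofList]; rfl

lemma RegAll.of_equiv {A B : Type u} [CommRing A] [CommRing B]
    (e : A ≃+* B) (h : RegAll A) : RegAll B := by
  intro p _
  have := h (p.comap e)
  refine RegMax.of_equiv (RingEquiv.ofBijective (Localization.localRingHom (p.comap (e : A →+* B)) p e rfl)
    ⟨?_, ?_⟩) this
  · have := (localRingHom_surj (e : A →+* B) e.surjective (p.comap (e : A →+* B)) p rfl).2
    rw [RingHom.injective_iff_ker_eq_bot, this,
      (RingHom.injective_iff_ker_eq_bot (e : A →+* B)).1 e.injective, Ideal.map_bot]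
  · exact (localRingHom_surj (e : A →+* B) e.surjective _ p rfl).1

lemma regAll_field (k : Type u) [Field k] : RegAll k := by
  intro p hp
  have h0 : p = ⊥ := by
    rcases Ideal.eq_bot_or_top p with h | h
    · exact h
    · exact absurd h hp.ne_top
  refine ⟨[], IsWeaklyRegular.nil _ _, ?_⟩
  rw [← Localization.AtPrime.map_eq_maximalIdeal]
  subst h0
  simp

open Polynomial in
lemma regMax_poly (R : Type u) [CommRing R] [IsLocalRing R] (hR : RegMax R)
    (p : Ideal R[X]) [p.IsPrime] (max : p.comap C = maximalIdeal R) :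
    RegMax (Localization.AtPrime p) := by
  obtain ⟨l, hl, hlm⟩ := hR
  have w1 : IsWeaklyRegular R[X] (l.map C) := IsWeaklyRegular.of_flat (S := R[X]) hl
  have key : ∃ l' : List R[X], IsWeaklyRegular R[X] l' ∧ Ideal.ofList l' = p := by
    by_cases eq : p = (maximalIdeal R).map C
    · exact ⟨l.map C, w1, by rw [eq, ← hlm, map_ofList]⟩
    · have : (p.comap C).IsMaximal := by simpa [max] using maximalIdeal.isMaximal R
      obtain ⟨y, hmon, hy⟩ := Polynomial.exists_monic_span_sup_map_eq R p this (by rwa [max])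
      refine ⟨l.map C ++ [y], ?_, ?_⟩
      · refine (append_surj (mapRingHom (residue R)) (map_surjective _ residue_surjective) _ _ ?_).2
          ⟨w1, ?_⟩
        · rw [ker_mapRingHom, ← map_ofList, hlm, IsLocalRing.ker_residue]
        · rw [List.map_singleton, isWeaklyRegular_singleton_iff]
          apply IsSMulRegular.of_ne_zero
          exact (hmon.map _).ne_zero
      · rw [Ideal.ofList_append, ← map_ofList, hlm, Ideal.ofList_singleton, ← max]
        exact hy.symm
  obtain ⟨l', h1, h2⟩ := key
  refine ⟨l'.map (algebraMap _ _), IsWeaklyRegular.of_flat h1, ?_⟩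
  rw [← map_ofList, h2, Localization.AtPrime.map_eq_maximalIdeal]

open Polynomial Ideal in
lemma RegAll.poly (R : Type u) [CommRing R] (h : RegAll R) : RegAll R[X] := by
  intro p hp
  let q := p.comap C
  let S := (Localization.AtPrime q)[X]
  let pc := Submonoid.map Polynomial.C.toMonoidHom q.primeCompl
  let : Algebra R[X] S := algebra R (Localization.AtPrime q)
  have : IsLocalization pc S := Polynomial.isLocalization _ _
  let pS := p.map (algebraMap R[X] S)
  have disj : Disjoint (pc : Set R[X]) (p : Set R[X]) := by
    simpa [pc, q] using! Set.disjoint_image_left.mpr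
      (Set.disjoint_compl_left_iff_subset.mpr (fun _ a ↦ a))
  have : pS.IsPrime := IsLocalization.isPrime_of_isPrime_disjoint pc _ _ ‹_› disj
  have : IsLocalization.AtPrime (Localization.AtPrime pS) p := by
    convert IsLocalization.isLocalization_isLocalization_atPrime_isLocalization pc
      (Localization.AtPrime pS) pS
    exact (IsLocalization.under_map_of_isPrime_disjoint pc _ ‹_› disj).symm
  have eq : comap C pS = maximalIdeal (Localization.AtPrime q) := by
    rw [← IsLocalization.map_under q.primeCompl _ (comap C pS),
      ← IsLocalization.map_under q.primeCompl _ (maximalIdeal (Localization.AtPrime q))]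
    simp only [comap_comap, S, pS]
    rw [← Polynomial.algebraMap_eq (R := Localization.AtPrime q),
      ← IsScalarTower.algebraMap_eq R (Localization.AtPrime q) (Localization.AtPrime q)[X],
      IsScalarTower.algebraMap_eq R R[X] (Localization.AtPrime q)[X], ← comap_comap,
      ← Ideal.under_def R[X], IsLocalization.under_map_of_isPrime_disjoint pc _ ‹_› disj]
    simp [q, IsLocalization.AtPrime.under_maximalIdeal (Localization.AtPrime q) q]
  have := regMax_poly _ (h q) pS eq
  exact RegMax.of_equiv (IsLocalization.algEquiv p.primeCompl
    (Localization.AtPrime pS) (Localization.AtPrime p)).toRingEquiv this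

lemma regAll_mvPoly (k : Type u) [Field k] (n : ℕ) : RegAll (MvPolynomial (Fin n) k) := by
  induction n with
  | zero => exact (regAll_field k).of_equiv (MvPolynomial.isEmptyRingEquiv k _).symm
  | succ n ih => exact (RegAll.poly _ ih).of_equiv (MvPolynomial.finSuccEquiv k n).symm.toRingEquiv

lemma fibre_reg (R : Type u) [CommRing R] [IsLocalRing R] (n : ℕ)
    (p : Ideal (MvPolynomial (Fin n) R)) [hp : p.IsPrime]
    (hpm : maximalIdeal R ≤ p.comap MvPolynomial.C) :
    ∃ l : List (Localization.AtPrime p), IsWeaklyRegular (Localization.AtPrime p ⧸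
      (maximalIdeal R).map (algebraMap R (Localization.AtPrime p))) l ∧
      (maximalIdeal R).map (algebraMap R (Localization.AtPrime p)) ⊔ Ideal.ofList l =
        maximalIdeal (Localization.AtPrime p) := by
  let f : MvPolynomial (Fin n) R →+* MvPolynomial (Fin n) (ResidueField R) :=
    MvPolynomial.map (residue R)
  have hf : Function.Surjective f := MvPolynomial.map_surjective _ residue_surjective
  have hk : RingHom.ker f = (maximalIdeal R).map MvPolynomial.C := by
    rw [MvPolynomial.ker_map, IsLocalRing.ker_residue]
  have hkp : RingHom.ker f ≤ p := by rw [hk, Ideal.map_le_iff_le_comap]; exact hpm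
  let q := p.map f
  have hq : q.IsPrime := Ideal.map_isPrime_of_surjective hf hkp
  have hpq : p = q.comap f := by
    rw [Ideal.comap_map_of_surjective f hf]
    exact (sup_eq_left.2 hkp).symm
  obtain ⟨h1, h2⟩ := localRingHom_surj f hf p q hpq
  obtain ⟨l, hl, hlm⟩ := regAll_mvPoly (ResidueField R) n q
  obtain ⟨l, rfl⟩ := exists_map_eq _ h1 l
  have hk' : RingHom.ker (Localization.localRingHom p q f hpq) = (maximalIdeal R).map
      (algebraMap R (Localization.AtPrime p)) := by
    rw [h2, hk, Ideal.map_map]; rfl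
  refine ⟨l, (weaklyRegular_surj _ h1 _ hk' l).2 hl, ?_⟩
  rw [← hk', sup_comm, ← IsLocalRing.maximalIdeal_comap (Localization.localRingHom p q f hpq),
    ← hlm, ← map_ofList, Ideal.comap_map_of_surjective _ h1]
  rfl

end CIAscent

namespace CIAscent
open RingTheory.Sequence

section Compl
variable {A : Type u} [CommRing A] {d : ℕ} (a : Fin d → A)

lemma aeval_mem_pow (n : ℕ) (p : MvPolynomial (Fin d) A)
    (hp : ∀ x : Fin d →₀ ℕ, x.degree < n → p.coeff x = 0) :
    MvPolynomial.aeval a p ∈ (Ideal.span (Set.range a)) ^ n := by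
  classical
  rw [MvPolynomial.aeval_def, MvPolynomial.eval₂_eq]
  refine Ideal.sum_mem _ fun x hx => ?_
  have hd : n ≤ x.degree := by
    by_contra h
    exact (MvPolynomial.mem_support_iff.mp hx) (hp x (by omega))
  refine Ideal.mul_mem_left _ _ (Ideal.pow_le_pow_right hd ?_)
  have : ∏ i ∈ x.support, a i ^ x i ∈ ∏ i ∈ x.support, (Ideal.span (Set.range a)) ^ (x i) :=
    Ideal.prod_mem_prod fun i _ => Ideal.pow_mem_pow (Ideal.subset_span (Set.mem_range_self i)) _
  rwa [Finset.prod_pow_eq_pow_sum] at this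

lemma exists_homog (n : ℕ) : ∀ x ∈ (Ideal.span (Set.range a)) ^ n,
    ∃ h : MvPolynomial (Fin d) A, h.IsHomogeneous n ∧ MvPolynomial.aeval a h = x := by
  induction n with
  | zero => intro x _; exact ⟨MvPolynomial.C x, MvPolynomial.isHomogeneous_C _ _, by simp⟩
  | succ n ih =>
    intro x hx
    rw [pow_succ] at hx
    refine Submodule.mul_induction_on hx ?_ ?_
    · intro y hy z hz
      obtain ⟨h, hh, rfl⟩ := ih y hy
      obtain ⟨c, rfl⟩ := (Ideal.mem_span_range_iff_exists_fun).mp hz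
      refine ⟨h * ∑ i, MvPolynomial.C (c i) * MvPolynomial.X i, hh.mul ?_, by simp⟩
      refine MvPolynomial.IsHomogeneous.sum _ _ _ fun i _ => ?_
      simpa using (MvPolynomial.isHomogeneous_C (Fin d) (c i)).mul
        (MvPolynomial.isHomogeneous_X A i)
    · rintro y z ⟨h, hh, rfl⟩ ⟨k, hk, rfl⟩
      exact ⟨h + k, hh.add hk, by simp⟩

noncomputable def trHom (n : ℕ) :
    MvPowerSeries (Fin d) A →+* A ⧸ (Ideal.span (Set.range a)) ^ n where
  toFun F := Ideal.Quotient.mk _ (MvPolynomial.aeval a (MvPowerSeries.truncTotal n F))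
  map_zero' := by simp
  map_add' F G := by simp
  map_one' := by
    rcases Nat.eq_zero_or_pos n with rfl | h
    · have : Subsingleton (A ⧸ (Ideal.span (Set.range a)) ^ 0) := by
        rw [pow_zero, Ideal.one_eq_top]; exact Ideal.Quotient.subsingleton_iff.mpr rfl
      exact Subsingleton.elim _ _
    · rw [MvPowerSeries.truncTotal_one (by omega)]; simp
  map_mul' F G := by
    rw [← map_mul, ← map_mul, Ideal.Quotient.mk_eq_mk_iff_sub_mem, ← map_sub]
    refine aeval_mem_pow a n _ fun x hx => ?_
    rw [MvPolynomial.coeff_sub, MvPowerSeries.coeff_truncTotal_mul_truncTotal_eq_coeff_mul _ _ hx,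
      MvPowerSeries.coeff_truncTotal _ hx, sub_self]

lemma trHom_compat {m n : ℕ} (hle : m ≤ n) :
    (Ideal.Quotient.factorPow (Ideal.span (Set.range a)) hle).comp (trHom a n) = trHom a m := by
  ext F
  change Ideal.Quotient.mk _ _ = Ideal.Quotient.mk _ _
  rw [Ideal.Quotient.mk_eq_mk_iff_sub_mem, ← map_sub]
  refine aeval_mem_pow a m _ fun x hx => ?_
  rw [MvPolynomial.coeff_sub, MvPowerSeries.coeff_truncTotal _ hx,
      MvPowerSeries.coeff_truncTotal _ (by omega), sub_self]

lemma trHom_surj : Function.Surjective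
    (AdicCompletion.liftRingHom _ (trHom a) (fun h => trHom_compat a h)) := by
  intro e
  obtain ⟨x, rfl⟩ := AdicCompletion.mk_surjective _ _ e
  obtain ⟨c, hc0, hc⟩ : ∃ c : ℕ → A, c 0 = 0 ∧ ∀ n, c (n+1) = x.1 (n+1) :=
    ⟨fun n => if n = 0 then 0 else x.1 n, by simp, fun n => by simp⟩
  have hx : ∀ n, x.1 (n+1) - x.1 n ∈ (Ideal.span (Set.range a)) ^ n := by
    intro n
    have := x.2 (Nat.le_succ n)
    have := SModEq.sub_mem.mp this.symm
    simpa using this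
  have h2 : ∀ n, c (n+1) - c n ∈ (Ideal.span (Set.range a)) ^ n := by
    intro n
    cases n with
    | zero => simp
    | succ n => rw [hc, hc]; exact hx _
  choose h hh hha using fun n => exists_homog a n _ (h2 n)
  obtain ⟨F, hF⟩ : ∃ F : MvPowerSeries (Fin d) A, ∀ x, F.coeff x = (h x.degree).coeff x :=
    ⟨fun x => (h x.degree).coeff x, fun x => rfl⟩
  refine ⟨F, AdicCompletion.ext_evalₐ fun n => ?_⟩
  rw [AdicCompletion.evalₐ_liftRingHom, AdicCompletion.evalₐ_mk]
  change Ideal.Quotient.mk _ (MvPolynomial.aeval a (MvPowerSeries.truncTotal n _)) = _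
  have : MvPowerSeries.truncTotal n F
      = ∑ i ∈ Finset.range n, h i := by
    ext x
    rw [MvPowerSeries.coeff_truncTotal_eq_ite, MvPolynomial.coeff_sum]
    have key : ∀ i, (h i).coeff x = if i = x.degree then (h x.degree).coeff x else 0 := by
      intro i
      split_ifs with hi
      · rw [hi]
      · exact (hh i).coeff_eq_zero (fun h => hi h.symm)
    rw [Finset.sum_congr rfl fun i _ => key i]
    simp only [Finset.sum_ite_eq', Finset.mem_range, hF]
  rw [this, map_sum, Finset.sum_congr rfl fun i _ => hha i, Finset.sum_range_sub, hc0,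
    sub_zero]
  cases n with
  | zero =>
    have : Subsingleton (A ⧸ (Ideal.span (Set.range a)) ^ 0) := by
      rw [pow_zero, Ideal.one_eq_top]; exact Ideal.Quotient.subsingleton_iff.mpr rfl
    exact Subsingleton.elim _ _
  | succ n => rw [hc]

end Compl

lemma completion_noeth {A : Type u} [CommRing A] [IsNoetherianRing A] (I : Ideal A) :
    IsNoetherianRing (AdicCompletion I A) := by
  obtain ⟨d, a, ha⟩ := Submodule.fg_iff_exists_fin_generating_family.mp
    (IsNoetherian.noetherian I)
  change Ideal.span (Set.range a) = I at ha
  subst ha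
  exact isNoetherianRing_of_surjective _ _ _ (trHom_surj a)

end CIAscent

namespace CIAscent
open RingTheory.Sequence

lemma weakly_base {A E : Type u} [CommRing A] [CommRing E] [Algebra A E] [Module.Flat A E]
    (I : Ideal A) (l : List A) (h : IsWeaklyRegular (A ⧸ I) l) :
    IsWeaklyRegular (E ⧸ I.map (algebraMap A E)) (l.map (algebraMap A E)) := by
  have h1 := h.of_flat_of_isBaseChange (TensorProduct.isBaseChange A (A ⧸ I) E)
  exact ((Ideal.qoutMapEquivTensorQout E).isWeaklyRegular_congr _).2 h1

lemma weakly_descend {A E : Type u} [CommRing A] [CommRing E] [Algebra A E]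
    [Module.FaithfullyFlat A E] (l : List A) (h : IsWeaklyRegular E (l.map (algebraMap A E))) :
    IsWeaklyRegular A l := by
  rw [weakly_of_bot, weak_iff] at h ⊢
  intro i hi e he
  have := h i (by simpa using hi) (algebraMap A E e)
  simp only [sup_bot_eq, List.getElem_map, ← map_mul, ← List.map_take, ← map_ofList] at this he ⊢
  have := this (Ideal.mem_map_of_mem _ he)
  rwa [← Ideal.mem_comap, Ideal.comap_map_eq_self_of_faithfullyFlat] at this

lemma approx {A E : Type u} [CommRing A] [CommRing E] [IsLocalRing E] [Algebra A E]
    (hres : ∀ e : E, ∃ a : A, algebraMap A E a - e ∈ maximalIdeal E) (J : Ideal A) (w : E)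
    (hw : w ∈ J.map (algebraMap A E)) :
    ∃ g ∈ J, algebraMap A E g - w ∈ maximalIdeal E * J.map (algebraMap A E) := by
  refine Submodule.span_induction ?_ ?_ ?_ ?_ hw
  · rintro _ ⟨g, hg, rfl⟩; exact ⟨g, hg, by simp⟩
  · exact ⟨0, J.zero_mem, by simp⟩
  · rintro x y _ _ ⟨g, hg, h⟩ ⟨g', hg', h'⟩
    refine ⟨g + g', J.add_mem hg hg', ?_⟩
    have := Ideal.add_mem _ h h'
    rw [map_add]; convert this using 1; ring
  · rintro e x hx ⟨g, hg, h⟩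
    obtain ⟨a, ha⟩ := hres e
    refine ⟨a * g, J.mul_mem_left _ hg, ?_⟩
    have h1 := Ideal.mul_mem_mul ha (Ideal.mem_map_of_mem (algebraMap A E) hg)
    have h2 := Ideal.mul_mem_left _ e h
    have := Ideal.add_mem _ h1 h2
    rw [map_mul, smul_eq_mul]; convert this using 1; ring

lemma descend {A E : Type u} [CommRing A] [CommRing E] [IsLocalRing A] [IsLocalRing E]
    [IsNoetherianRing E] [Algebra A E] [Module.Flat A E] [IsLocalHom (algebraMap A E)]
    (hres : ∀ e : E, ∃ a : A, algebraMap A E a - e ∈ maximalIdeal E) (J : Ideal A)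
    (hJ : J ≠ ⊤) (w : List E)
    (hw : IsRegular E w) (hwJ : Ideal.ofList w = J.map (algebraMap A E)) :
    ∃ g : List A, IsRegular A g ∧ Ideal.ofList g = J := by
  have : ∀ x ∈ w, ∃ g ∈ J, algebraMap A E g - x ∈ maximalIdeal E * J.map (algebraMap A E) := by
    intro x hx
    exact approx hres J x (hwJ ▸ Ideal.subset_span hx)
  have key : ∀ w : List E, (∀ x ∈ w, ∃ g ∈ J, algebraMap A E g - x ∈ 
      maximalIdeal E * J.map (algebraMap A E)) → ∃ g : List A, 
      List.Forall₂ (fun f g => g - f ∈ maximalIdeal E * J.map (algebraMap A E)) w 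
        (g.map (algebraMap A E)) := by
    intro w
    induction w with
    | nil => intro _; exact ⟨[], by simp⟩
    | cons x w ih =>
      intro h
      obtain ⟨g, _, hg'⟩ := h x (by simp)
      obtain ⟨l, hl⟩ := ih fun y hy => h y (by simp [hy])
      exact ⟨g :: l, List.Forall₂.cons hg' hl⟩
  obtain ⟨g, hg⟩ := key w this
  have hp := perturb w (g.map (algebraMap A E)) [] (by simpa using hw) (by simpa [hwJ] using hg)
  simp only [List.nil_append] at hp
  have : Module.FaithfullyFlat A E := Module.FaithfullyFlat.of_flat_of_isLocalHom
  have hgJ : Ideal.ofList g = J := by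
    rw [← Ideal.comap_map_eq_self_of_faithfullyFlat (B := E) (Ideal.ofList g), map_ofList, hp.2, hwJ,
      Ideal.comap_map_eq_self_of_faithfullyFlat]
  exact ⟨g, isRegular_of_weakly (weakly_descend g hp.1.toIsWeaklyRegular)
    (hgJ ▸ IsLocalRing.le_maximalIdeal hJ), hgJ⟩

lemma ker_regular {R E T : Type u} [CommRing R] [CommRing E] [CommRing T] [IsLocalRing R]
    [IsLocalRing E] [IsLocalRing T] [IsNoetherianRing R] [IsNoetherianRing E] [Algebra R E]
    [Algebra R T] [Module.Flat R E] [Module.Flat R T] [IsLocalHom (algebraMap R E)]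
    (φ : E →ₐ[R] T) (hφ : Function.Surjective φ) (l : List E)
    (hl : IsWeaklyRegular (E ⧸ (maximalIdeal R).map (algebraMap R E)) l)
    (hlm : (maximalIdeal R).map (algebraMap R E) ⊔ Ideal.ofList l = maximalIdeal E)
    (mT : Ideal T) (hmT : mT = (maximalIdeal R).map (algebraMap R T))
    [IsLocalRing (T ⧸ mT)] (t : List (T ⧸ mT)) (ht : IsRegular (T ⧸ mT) t)
    (htm : Ideal.ofList t = maximalIdeal _) :
    ∃ z : List E, IsRegular E z ∧ Ideal.ofList z = RingHom.ker φ := by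
  set mE := (maximalIdeal R).map (algebraMap R E) with hmE
  have hmap : mE.map (φ : E →+* T) = mT := by
    rw [hmE, hmT, Ideal.map_map]; congr 1; exact φ.comp_algebraMap
  have hle : mE ≤ maximalIdeal E := hlm ▸ le_sup_left
  have : Nontrivial (E ⧸ mE) := Ideal.Quotient.nontrivial_iff.mpr
    (fun h => (maximalIdeal.isMaximal E).ne_top (top_le_iff.mp (h ▸ hle)))
  have : IsLocalRing (E ⧸ mE) := .of_surjective' _ (Ideal.Quotient.mk_surjective (I := mE))
  let φb : E ⧸ mE →+* T ⧸ mT := Ideal.quotientMap mT (φ : E →+* T) 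
    (by rw [← Ideal.map_le_iff_le_comap, hmap])
  have hφb : Function.Surjective φb := by
    intro y
    obtain ⟨y, rfl⟩ := Ideal.Quotient.mk_surjective y
    obtain ⟨x, rfl⟩ := hφ y
    exact ⟨Ideal.Quotient.mk _ x, rfl⟩
  have hum : Ideal.ofList (l.map (Ideal.Quotient.mk mE)) = maximalIdeal (E ⧸ mE) := by
    rw [← IsLocalRing.map_maximalIdeal_of_surjective _ (Ideal.Quotient.mk_surjective (I := mE)),
      ← hlm, Ideal.map_sup, Ideal.map_quotient_self, bot_sup_eq, map_ofList]
  have hu : IsRegular (E ⧸ mE) (l.map (Ideal.Quotient.mk mE)) := by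
    refine isRegular_of_weakly ((weaklyRegular_surj _ Ideal.Quotient.mk_surjective mE
      Ideal.mk_ker l).1 hl) hum.le
  obtain ⟨zb, hzb, hzbk⟩ := regular_surj _ (E ⧸ mE) (T ⧸ mT) φb hφb _ t hu hum rfl ht htm
  have lift : ∀ x ∈ RingHom.ker φb, ∃ z ∈ RingHom.ker φ, Ideal.Quotient.mk mE z = x := by
    intro x hx
    obtain ⟨x, rfl⟩ := Ideal.Quotient.mk_surjective x
    have : φ x ∈ mT := Ideal.Quotient.eq_zero_iff_mem.mp hx
    rw [← hmap] at this
    obtain ⟨y, hy, hyx⟩ := (Ideal.mem_map_iff_of_surjective (φ : E →+* T) hφ).1 this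
    refine ⟨x - y, ?_, ?_⟩
    · rw [RingHom.mem_ker, map_sub, sub_eq_zero]; exact hyx.symm
    · rw [map_sub, Ideal.Quotient.eq_zero_iff_mem.mpr hy, sub_zero]
  have key : ∀ l : List (E ⧸ mE), (∀ x ∈ l, x ∈ RingHom.ker φb) → ∃ z : List E, 
      (∀ x ∈ z, x ∈ RingHom.ker φ) ∧ z.map (Ideal.Quotient.mk mE) = l := by
    intro l
    induction l with
    | nil => intro _; exact ⟨[], by simp, rfl⟩
    | cons x l ih =>
      intro h
      obtain ⟨y, hy, hyx⟩ := lift x (h x (by simp))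
      obtain ⟨z, hz, hzl⟩ := ih fun y hy => h y (by simp [hy])
      exact ⟨y :: z, by simpa using ⟨hy, hz⟩, by simp [hyx, hzl]⟩
  obtain ⟨z, hz, rfl⟩ := key zb fun x hx => hzbk ▸ Ideal.subset_span hx
  have hzK : Ideal.ofList z ≤ RingHom.ker φ := Ideal.span_le.mpr hz
  have hzw : IsWeaklyRegular E z := weakly_lift z ((weaklyRegular_surj _ 
    Ideal.Quotient.mk_surjective mE Ideal.mk_ker z).2 hzb.toIsWeaklyRegular)
  have hKz : RingHom.ker φ ≤ Ideal.ofList z := by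
    refine Submodule.le_of_le_smul_of_le_jacobson_bot (I := maximalIdeal E)
      (IsNoetherian.noetherian _) (IsLocalRing.maximalIdeal_le_jacobson _) ?_
    intro x hx
    have : Ideal.Quotient.mk mE x ∈ RingHom.ker φb := by
      rw [RingHom.mem_ker]
      change Ideal.Quotient.mk mT (φ x) = 0
      rw [RingHom.mem_ker.1 hx, map_zero]
    rw [← hzbk, ← map_ofList] at this
    obtain ⟨y, hy, hyx⟩ := (Ideal.mem_map_iff_of_surjective _ Ideal.Quotient.mk_surjective).1 this
    have h1 : x - y ∈ mE := (Ideal.Quotient.mk_eq_mk_iff_sub_mem _ _).1 hyx.symm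
    have h2 : x - y ∈ RingHom.ker φ ⊓ mE := ⟨Ideal.sub_mem _ hx (hzK hy), h1⟩
    have h3 := ker_inf_le φ hφ _ h2
    rw [show x = y + (x - y) by ring]
    exact Submodule.add_mem_sup hy (Ideal.mul_mono_left hle h3)
  have heq := le_antisymm hzK hKz
  refine ⟨z, isRegular_of_weakly hzw ?_, heq⟩
  rw [heq]
  exact IsLocalRing.le_maximalIdeal (RingHom.ker_ne_top _)

end CIAscent

namespace CIAscent
open RingTheory.Sequence

lemma core1 {R A E T Sh : Type u} [CommRing R] [CommRing A] [CommRing E] [CommRing T] [CommRing Sh]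
    [IsLocalRing R] [IsLocalRing A] [IsLocalRing E] [IsLocalRing T] [Nontrivial Sh]
    [IsNoetherianRing R] [IsNoetherianRing E] [Algebra R A] [Algebra A E] [Algebra R E]
    [IsScalarTower R A E] [Algebra R T] [Module.Flat R A] [Module.Flat A E] [Module.Flat R T]
    [IsLocalHom (algebraMap R E)] [IsLocalHom (algebraMap A E)]
    (hmax : (maximalIdeal A).map (algebraMap A E) = maximalIdeal E)
    (hres : ∀ e : E, ∃ a : A, algebraMap A E a - e ∈ maximalIdeal E)
    (φ : E →ₐ[R] T) (hφ : Function.Surjective φ) (l : List A)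
    (hl : IsWeaklyRegular (A ⧸ (maximalIdeal R).map (algebraMap R A)) l)
    (hlm : (maximalIdeal R).map (algebraMap R A) ⊔ Ideal.ofList l = maximalIdeal A)
    (mT : Ideal T) (hmT : mT = (maximalIdeal R).map (algebraMap R T))
    [IsLocalRing (T ⧸ mT)] (t : List (T ⧸ mT)) (ht : IsRegular (T ⧸ mT) t)
    (htm : Ideal.ofList t = maximalIdeal _) (g : T →+* Sh) (f : List T) (hf : IsRegular T f)
    (hfg : Ideal.ofList f = RingHom.ker g) (J : Ideal A)
    (hJ : J.map (algebraMap A E) = RingHom.ker (g.comp (φ : E →+* T))) :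
    ∃ g : List A, IsRegular A g ∧ Ideal.ofList g = J := by
  have hmap : ((maximalIdeal R).map (algebraMap R A)).map (algebraMap A E) =
      (maximalIdeal R).map (algebraMap R E) := by
    rw [Ideal.map_map, ← IsScalarTower.algebraMap_eq]
  have : Module.Flat R E := Module.Flat.trans R A E
  obtain ⟨z, hz, hzk⟩ := ker_regular φ hφ (l.map (algebraMap A E))
    (by rw [← hmap]; exact weakly_base _ l hl)
    (by rw [← hmap, ← map_ofList, ← Ideal.map_sup, hlm, hmax]) mT hmT t ht htm
  obtain ⟨f', rfl⟩ := exists_map_eq φ hφ f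
  have h1 := weaklyRegular_comp (φ : E →+* T) hφ g z f' hzk.symm hfg.symm
    hz.toIsWeaklyRegular hf.toIsWeaklyRegular
  have hne : RingHom.ker (g.comp (φ : E →+* T)) ≠ ⊤ := RingHom.ker_ne_top _
  refine descend hres J ?_ (z ++ f') (isRegular_of_weakly h1.1 ?_) (by rw [hJ, h1.2])
  · rintro rfl
    rw [← hJ, Ideal.map_top] at hne
    exact hne rfl
  · rw [← h1.2]; exact IsLocalRing.le_maximalIdeal hne

lemma approx_pow {A E : Type u} [CommRing A] [CommRing E] [IsLocalRing E] [IsLocalRing A]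
    [Algebra A E] (hmax : (maximalIdeal A).map (algebraMap A E) = maximalIdeal E)
    (hres : ∀ e : E, ∃ a : A, algebraMap A E a - e ∈ maximalIdeal E) (k : ℕ) (e : E) :
    ∃ a : A, algebraMap A E a - e ∈ maximalIdeal E ^ k := by
  induction k with
  | zero => exact ⟨0, by simp⟩
  | succ k ih =>
    obtain ⟨a, ha⟩ := ih
    have hk : (maximalIdeal A ^ k).map (algebraMap A E) = maximalIdeal E ^ k := by
      rw [Ideal.map_pow, hmax]
    obtain ⟨g, _, hg'⟩ := approx hres (maximalIdeal A ^ k) _ (hk ▸ ha)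
    rw [hk, ← pow_succ'] at hg'
    refine ⟨a - g, ?_⟩
    have := neg_mem hg'
    rw [map_sub]; convert this using 1; ring

lemma res_completion {A : Type u} [CommRing A] [IsLocalRing A] [IsNoetherianRing A]
    (e : AdicCompletion (maximalIdeal A) A) :
    ∃ a : A, algebraMap A (AdicCompletion (maximalIdeal A) A) a - e ∈
      maximalIdeal (AdicCompletion (maximalIdeal A) A) := by
  obtain ⟨a, ha⟩ := Submodule.Quotient.mk_surjective _ (e.1 1)
  refine ⟨a, ?_⟩
  rw [AdicCompletion.mem_maximalIdeal_iff_eval_one_eq_zero]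
  change Submodule.Quotient.mk a - e.1 1 = 0
  rw [ha, sub_self]

lemma exists_lift {A T : Type u} [CommRing A] [IsLocalRing A] [IsNoetherianRing A]
    [CommRing T] [IsLocalRing T] [IsAdicComplete (maximalIdeal T) T] (ρ : A →+* T) [IsLocalHom ρ] :
    ∃ φ : AdicCompletion (maximalIdeal A) A →+* T, φ.comp (algebraMap A _) = ρ := by
  have hle : ∀ n, maximalIdeal A ^ n ≤ (maximalIdeal T ^ n).comap ρ := by
    intro n
    rw [← Ideal.map_le_iff_le_comap, Ideal.map_pow]
    exact Ideal.pow_right_mono (((IsLocalRing.local_hom_TFAE ρ).out 0 2).1 ‹_›) n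
  let f : ∀ n, AdicCompletion (maximalIdeal A) A →+* T ⧸ maximalIdeal T ^ n := fun n =>
    (Ideal.quotientMap (maximalIdeal T ^ n) ρ (hle n)).comp
      (AdicCompletion.evalₐ (maximalIdeal A) n : _ →+* _)
  have hf : ∀ {m n : ℕ} (h : m ≤ n),
      (Ideal.Quotient.factorPow (maximalIdeal T) h).comp (f n) = f m := by
    intro m n h
    ext x
    obtain ⟨x, rfl⟩ := AdicCompletion.mk_surjective _ _ x
    simp only [f, RingHom.comp_apply, RingHom.coe_coe, AdicCompletion.evalₐ_mk,
      Ideal.quotientMap_mk]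
    change Ideal.Quotient.mk _ _ = _
    rw [Ideal.Quotient.mk_eq_mk_iff_sub_mem, ← map_sub]
    have := SModEq.sub_mem.mp (x.2 h).symm
    exact hle m (by simpa using this)
  refine ⟨IsAdicComplete.liftRingHom (maximalIdeal T) f hf, ?_⟩
  ext a
  apply IsHausdorff.eq_iff_smodEq (I := maximalIdeal T).mpr
  intro n
  rw [SModEq.sub_mem]
  have : Ideal.Quotient.mk (maximalIdeal T ^ n) (IsAdicComplete.liftRingHom (maximalIdeal T) f hf
      (algebraMap A _ a)) = Ideal.Quotient.mk _ (ρ a) := by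
    rw [IsAdicComplete.mk_liftRingHom]
    simp [f]
  rw [Ideal.Quotient.mk_eq_mk_iff_sub_mem] at this
  simpa using this

lemma core2 {R A S T : Type u} [CommRing R] [CommRing A] [CommRing S] [CommRing T]
    [IsLocalRing R] [IsLocalRing A] [IsLocalRing S] [IsLocalRing T]
    [IsNoetherianRing R] [IsNoetherianRing A] [IsNoetherianRing S] [IsNoetherianRing T]
    [Algebra R A] [Algebra R T] [Module.Flat R A] [Module.Flat R T]
    [IsLocalHom (algebraMap R A)] [IsAdicComplete (maximalIdeal T) T]
    (l : List A) (hl : IsWeaklyRegular (A ⧸ (maximalIdeal R).map (algebraMap R A)) l)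
    (hlm : (maximalIdeal R).map (algebraMap R A) ⊔ Ideal.ofList l = maximalIdeal A)
    (mT : Ideal T) (hmT : mT = (maximalIdeal R).map (algebraMap R T))
    [IsLocalRing (T ⧸ mT)] (t : List (T ⧸ mT)) (ht : IsRegular (T ⧸ mT) t)
    (htm : Ideal.ofList t = maximalIdeal _)
    (π : A →+* S) (hπ : Function.Surjective π) (ρ : A →ₐ[R] T) [IsLocalHom (ρ : A →+* T)]
    (hρm : (maximalIdeal A).map (ρ : A →+* T) = maximalIdeal T)
    (hρres : ∀ y : T, ∃ a, ρ a - y ∈ maximalIdeal T)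
    (g : T →+* AdicCompletion (maximalIdeal S) S) [IsLocalHom g] (f : List T) (hf : IsRegular T f)
    (hfg : Ideal.ofList f = RingHom.ker g)
    (hcomm : g.comp (ρ : A →+* T) = (algebraMap S (AdicCompletion (maximalIdeal S) S)).comp π) :
    ∃ g : List A, IsRegular A g ∧ Ideal.ofList g = RingHom.ker π := by
  let E := AdicCompletion (maximalIdeal A) A
  have : IsNoetherianRing E := completion_noeth _
  have hmax : (maximalIdeal A).map (algebraMap A E) = maximalIdeal E :=
    AdicCompletion.maximalIdeal_eq_map.symm
  obtain ⟨φ₀, hφ₀⟩ := exists_lift (ρ : A →+* T)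
  have hφa : ∀ a, φ₀ (algebraMap A E a) = ρ a := fun a => congr($hφ₀ a)
  have : IsScalarTower R A E := inferInstance
  let φ : E →ₐ[R] T := { φ₀ with
    commutes' := fun r => by
      change φ₀ (algebraMap R E r) = _
      rw [IsScalarTower.algebraMap_apply R A E, hφa, AlgHom.commutes] }
  have hφmap : (maximalIdeal E).map φ₀ = maximalIdeal T := by
    rw [← hmax, Ideal.map_map, hφ₀, hρm]
  have hφs : Function.Surjective φ₀ := by
    have : IsHausdorff ((maximalIdeal E).map φ₀) T := by rw [hφmap]; infer_instance
    refine surjective_of_mk_map_comp_surjective (I := maximalIdeal E) φ₀ ?_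
    rw [hφmap]
    intro y
    obtain ⟨y, rfl⟩ := Ideal.Quotient.mk_surjective y
    obtain ⟨a, ha⟩ := hρres y
    exact ⟨algebraMap A E a, by
      rw [RingHom.comp_apply, hφa, Ideal.Quotient.mk_eq_mk_iff_sub_mem]; exact ha⟩
  have : IsLocalHom (algebraMap R E) := by
    rw [IsScalarTower.algebraMap_eq R A E]; infer_instance
  have hres : ∀ e : E, ∃ a : A, algebraMap A E a - e ∈ maximalIdeal E := res_completion
  refine core1 (E := E) hmax hres φ hφs l hl hlm mT hmT t ht htm g f hf hfg _ ?_
  apply le_antisymm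
  · rw [Ideal.map_le_iff_le_comap]
    intro a ha
    change g (φ₀ (algebraMap A E a)) = 0
    rw [hφa]
    have : g (ρ a) = algebraMap S _ (π a) := congr($hcomm a)
    rw [this, RingHom.mem_ker.1 ha, map_zero]
  · intro x hx
    have hx : g (φ₀ x) = 0 := hx
    apply krull_closed
    intro k
    obtain ⟨a, ha⟩ := approx_pow hmax hres k x
    have hcomp : g (φ₀ (algebraMap A E a - x)) = algebraMap S _ (π a) := by
      rw [map_sub, map_sub, hx, sub_zero, hφa]; exact congr($hcomm a)
    have hmem : g (φ₀ (algebraMap A E a - x)) ∈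
        (maximalIdeal S ^ k).map (algebraMap S (AdicCompletion (maximalIdeal S) S)) := by
      rw [Ideal.map_pow, ← AdicCompletion.maximalIdeal_eq_map]
      have h1 : φ₀ (algebraMap A E a - x) ∈ maximalIdeal T ^ k := by
        rw [← hφmap, ← Ideal.map_pow]; exact Ideal.mem_map_of_mem _ ha
      have h2 := Ideal.mem_map_of_mem g h1
      rw [Ideal.map_pow] at h2
      exact Ideal.pow_right_mono (((IsLocalRing.local_hom_TFAE g).out 0 2).1 ‹_›) k h2
    have hπa : π a ∈ maximalIdeal S ^ k := by
      rw [hcomp] at hmem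
      have h3 := Ideal.mem_map_of_mem (AdicCompletion.evalₐ (maximalIdeal S) k).toRingHom hmem
      rw [Ideal.map_map] at h3
      have h4 : (AdicCompletion.evalₐ (maximalIdeal S) k).toRingHom.comp
        (algebraMap S (AdicCompletion (maximalIdeal S) S)) = Ideal.Quotient.mk _ := by
        ext s; simp
      rw [h4, Ideal.map_quotient_self] at h3
      have h5 : Ideal.Quotient.mk (maximalIdeal S ^ k) (π a) = 0 := by
        rw [← h4]; exact h3
      exact Ideal.Quotient.eq_zero_iff_mem.mp h5
    rw [← IsLocalRing.map_maximalIdeal_of_surjective π hπ, ← Ideal.map_pow] at hπa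
    obtain ⟨b, hb, hba⟩ := (Ideal.mem_map_iff_of_surjective π hπ).1 hπa
    rw [show x = algebraMap A E (a - b) + (algebraMap A E b - (algebraMap A E a - x)) by
      rw [map_sub]; ring]
    refine Submodule.add_mem_sup (Ideal.mem_map_of_mem _ ?_) (Ideal.sub_mem _ ?_ ha)
    · rw [RingHom.mem_ker, map_sub, hba, sub_self]
    · rw [← hmax, ← Ideal.map_pow]; exact Ideal.mem_map_of_mem _ hb

end CIAscent

namespace CIAscent
open RingTheory.Sequence

lemma exists_fin_family {α : Type*} (l : List α) : ∃ (n : ℕ) (w : Fin n → α),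
    ∀ a, a ∈ l ↔ ∃ i, w i = a :=
  ⟨l.length, l.get, fun a => List.mem_iff_get⟩

lemma loc_map {A B : Type*} [CommRing A] [CommRing B] [IsLocalRing A] [IsLocalRing B]
    (f : A →+* B) [IsLocalHom f] (x : A) (hx : x ∈ maximalIdeal A) : f x ∈ maximalIdeal B := by
  rw [← IsLocalRing.maximalIdeal_comap f] at hx
  exact hx

lemma presentation (R S : Type u) [CommRing R] [CommRing S] [IsLocalRing R] [IsLocalRing S]
    [IsNoetherianRing R] [IsNoetherianRing S] [Algebra R S] [IsLocalHom (algebraMap R S)]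
    [Algebra.EssFiniteType R S] (hci : IsCIAt R S (algebraMap R S) (maximalIdeal S)) :
    ∃ (n : ℕ) (p : Ideal (MvPolynomial (Fin n) R)) (_ : p.IsPrime)
      (π : Localization.AtPrime p →ₐ[R] S), Function.Surjective π ∧
      ∃ g : List (Localization.AtPrime p), IsRegular (Localization.AtPrime p) g ∧
        Ideal.ofList g = RingHom.ker π := by
  obtain ⟨T, _, f0, g, ⟨hc, hN, ⟨hTl, hTc⟩, ⟨hloc, hflat, -, hTb, t, ht, htm⟩, hs, hgl⟩,
    rs, hrs, hrsk⟩ := hci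
  letI : Algebra R T := f0.toAlgebra
  have hflat : Module.Flat R T := hflat
  obtain ⟨n, w, hw⟩ := exists_fin_family
    ((Algebra.EssFiniteType.finset R S).toList.map (fun s => (s, Function.surjInv hs
      (algebraMap S _ s))) ++ rs.map (fun f => ((0 : S), f)))
  let x : Fin n → S := fun i => (w i).1
  let y : Fin n → T := fun i => (w i).2
  have hxy : ∀ i, g (y i) = algebraMap S _ (x i) := by
    intro i
    have := (hw (w i)).2 ⟨i, rfl⟩
    rw [List.mem_append, List.mem_map, List.mem_map] at this
    rcases this with ⟨s, _, h⟩ | ⟨f, hf, h⟩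
    · simp only [x, y, ← h]; exact Function.surjInv_eq hs _
    · simp only [x, y, ← h, map_zero]
      have : f ∈ RingHom.ker g := hrsk ▸ Ideal.subset_span hf
      exact this
  have hx : ∀ s ∈ Algebra.EssFiniteType.finset R S, ∃ i, x i = s := by
    intro s h
    obtain ⟨i, hi⟩ := (hw (s, _)).1 (List.mem_append_left _ (List.mem_map.2 ⟨s, by simpa using h, rfl⟩))
    exact ⟨i, by simp [x, hi]⟩
  have hy : ∀ f ∈ rs, ∃ i, x i = 0 ∧ y i = f := by
    intro f h
    obtain ⟨i, hi⟩ := (hw (0, f)).1 (List.mem_append_right _ (List.mem_map.2 ⟨f, h, rfl⟩))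
    exact ⟨i, by simp [x, hi], by simp [y, hi]⟩
  let π₀ : MvPolynomial (Fin n) R →ₐ[R] S := MvPolynomial.aeval x
  let ρ₀ : MvPolynomial (Fin n) R →ₐ[R] T := MvPolynomial.aeval y
  have hcomm₀ : ∀ b, g (ρ₀ b) = algebraMap S _ (π₀ b) := by
    intro b
    have : (g.comp (ρ₀ : _ →+* T)) = (algebraMap S (AdicCompletion (maximalIdeal S) S)).comp
        (π₀ : MvPolynomial (Fin n) R →+* S) := by
      apply MvPolynomial.ringHom_ext
      · intro r
        have := congr($hc r)
        simp only [RingHom.comp_apply] at this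
        simp only [RingHom.comp_apply, RingHom.coe_coe, ← MvPolynomial.algebraMap_eq,
          AlgHom.commutes, ← this]
        rfl
      · intro i
        simp [ρ₀, π₀, hxy]
    exact congr($this b)
  let p : Ideal (MvPolynomial (Fin n) R) := (maximalIdeal S).comap (π₀ : _ →+* S)
  have hp : p.IsPrime := Ideal.comap_isPrime _ _
  let A := Localization.AtPrime p
  have hunit : ∀ b : p.primeCompl, IsUnit (π₀ b) := by
    intro b
    by_contra h
    exact b.2 h
  have hunit' : ∀ b : p.primeCompl, IsUnit (ρ₀ b) := by
    intro b
    apply isUnit_of_map_unit g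
    rw [hcomm₀]
    exact (hunit b).map _
  let π : A →ₐ[R] S := IsLocalization.liftAlgHom (M := p.primeCompl) hunit
  let ρ : A →ₐ[R] T := IsLocalization.liftAlgHom (M := p.primeCompl) hunit'
  have hπ0 : ∀ b, π (algebraMap _ A b) = π₀ b := fun b => IsLocalization.lift_eq _ b
  have hρ0 : ∀ b, ρ (algebraMap _ A b) = ρ₀ b := fun b => IsLocalization.lift_eq _ b
  have hcomm : g.comp (ρ : A →+* T) =
      (algebraMap S (AdicCompletion (maximalIdeal S) S)).comp (π : A →+* S) := by
    apply IsLocalization.ringHom_ext p.primeCompl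
    refine RingHom.ext fun b => ?_
    simp only [RingHom.comp_apply, RingHom.coe_coe, hπ0, hρ0, hcomm₀]
  have hcommA : ∀ a, g (ρ a) = algebraMap S _ (π a) := fun a => congr($hcomm a)
  have hadj : ∀ s ∈ Algebra.EssFiniteType.subalgebra R S, ∃ b, π₀ b = s := by
    intro s h
    have h1 : Algebra.EssFiniteType.subalgebra R S ≤ π₀.range := by
      rw [← Algebra.adjoin_range_eq_range_aeval]
      exact Algebra.adjoin_mono fun s hs => hx s hs
    exact h1 h
  have hπs : Function.Surjective π := by
    intro s
    have := Algebra.EssFiniteType.isLocalization R S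
    obtain ⟨⟨a, b⟩, hab⟩ := IsLocalization.surj (Algebra.EssFiniteType.submonoid R S) s
    obtain ⟨a', ha'⟩ := hadj _ a.2
    obtain ⟨b', hb'⟩ := hadj _ b.1.2
    have hbu : IsUnit (b.1 : S) := b.2
    have hb'p : b' ∈ p.primeCompl := by
      intro h
      have : π₀ b' ∈ maximalIdeal S := h
      rw [hb'] at this
      exact this hbu
    refine ⟨IsLocalization.mk' A a' ⟨b', hb'p⟩, ?_⟩
    have h2 := congrArg π (IsLocalization.mk'_spec A a' ⟨b', hb'p⟩)
    rw [map_mul, hπ0, hπ0, hb', ha'] at h2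
    exact hbu.mul_right_cancel (h2.trans hab.symm)
  have hπl : IsLocalHom (π : A →+* S) := Function.Surjective.isLocalHom _ hπs
  have hρl : IsLocalHom (ρ : A →+* T) := by
    have : IsLocalHom (g.comp (ρ : A →+* T)) := by rw [hcomm]; infer_instance
    exact isLocalHom_of_comp _ g
  have hRA : IsLocalHom (algebraMap R A) := by
    have : IsLocalHom ((π : A →+* S).comp (algebraMap R A)) := by
      rw [π.comp_algebraMap]; infer_instance
    exact isLocalHom_of_comp _ (π : A →+* S)
  have hflatA : Module.Flat R A := Module.Flat.trans R (MvPolynomial (Fin n) R) A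
  have hpm : maximalIdeal R ≤ p.comap MvPolynomial.C := by
    intro r hr
    change π₀ (algebraMap _ _ r) ∈ maximalIdeal S
    rw [AlgHom.commutes]
    exact loc_map (algebraMap R S) r hr
  obtain ⟨l, hl, hlm⟩ := fibre_reg R n p hpm
  have hρm : (maximalIdeal A).map (ρ : A →+* T) = maximalIdeal T := by
    apply le_antisymm (((IsLocalRing.local_hom_TFAE (ρ : A →+* T)).out 0 2).1 ‹_›)
    intro z hz
    have h1 : g z ∈ maximalIdeal (AdicCompletion (maximalIdeal S) S) :=
      loc_map g z hz
    have h0 : (maximalIdeal S).map (algebraMap S (AdicCompletion (maximalIdeal S) S)) =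
        ((maximalIdeal A).map (π : A →+* S)).map (algebraMap S (AdicCompletion (maximalIdeal S) S)) :=
      congrArg _ (IsLocalRing.map_maximalIdeal_of_surjective (π : A →+* S) hπs).symm
    rw [AdicCompletion.maximalIdeal_eq_map, h0, Ideal.map_map, ← hcomm, ← Ideal.map_map] at h1
    obtain ⟨v, hv, hvz⟩ := (Ideal.mem_map_iff_of_surjective g hs).1 h1
    have h2 : z - v ∈ RingHom.ker g := by rw [RingHom.mem_ker, map_sub, hvz, sub_self]
    rw [← hrsk] at h2
    have h3 : Ideal.span {a | a ∈ rs} ≤ (maximalIdeal A).map (ρ : A →+* T) := by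
      rw [Ideal.span_le]
      intro f hf
      obtain ⟨i, hi, hi'⟩ := hy f hf
      have : ρ (algebraMap (MvPolynomial (Fin n) R) A (MvPolynomial.X i)) = f := by
        rw [hρ0]; simp [ρ₀, hi']
      rw [← this]
      refine Ideal.mem_map_of_mem (ρ : A →+* T) ?_
      rw [← IsLocalRing.maximalIdeal_comap (π : A →+* S)]
      change π (algebraMap (MvPolynomial (Fin n) R) A (MvPolynomial.X i)) ∈ maximalIdeal S
      rw [hπ0]
      simp [π₀, hi]
    have := Ideal.add_mem _ (h3 h2) hv
    simpa using this
  have hρres : ∀ z : T, ∃ a, ρ a - z ∈ maximalIdeal T := by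
    intro z
    obtain ⟨s, hs'⟩ := res_completion (g z)
    obtain ⟨a, rfl⟩ := hπs s
    refine ⟨a, ?_⟩
    rw [← IsLocalRing.maximalIdeal_comap g, Ideal.mem_comap, map_sub, hcommA]
    exact hs'
  refine ⟨n, p, hp, π, hπs, ?_⟩
  exact core2 l hl hlm _ rfl t ht htm (π : A →+* S) hπs ρ hρm hρres g rs hrs hrsk hcomm

end CIAscent

namespace CIAscent
open CategoryTheory

abbrev ID (Q : Type u) [CommRing Q] (n : ℕ) (N : Type u) [AddCommGroup N] [Module Q N] : Prop :=
  HasInjectiveDimensionLT (ModuleCat.of Q (CharacterModule N)) (n+1)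

def dualSC {Q : Type u} [CommRing Q] {A B C : Type u} [AddCommGroup A] [AddCommGroup B]
    [AddCommGroup C] [Module Q A] [Module Q B] [Module Q C] (f : A →ₗ[Q] B) (g : B →ₗ[Q] C)
    (h : g ∘ₗ f = 0) : ShortComplex (ModuleCat.{u} Q) :=
  ShortComplex.mk (ModuleCat.ofHom (CharacterModule.dual g)) (ModuleCat.ofHom (CharacterModule.dual f))
    (by
      rw [← ModuleCat.ofHom_comp, ← CharacterModule.dual_comp, h, CharacterModule.dual_zero]
      rfl)

lemma dualSC_exact {Q : Type u} [CommRing Q] {A B C : Type u} [AddCommGroup A] [AddCommGroup B]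
    [AddCommGroup C] [Module Q A] [Module Q B] [Module Q C] (f : A →ₗ[Q] B) (g : B →ₗ[Q] C)
    (h : g ∘ₗ f = 0) (hf : Function.Injective f) (hg : Function.Surjective g)
    (hfg : LinearMap.ker g ≤ LinearMap.range f) : (dualSC f g h).ShortExact := by
  have : Mono (dualSC f g h).f :=
    (ModuleCat.mono_iff_injective _).2 (CharacterModule.dual_injective_of_surjective g hg)
  have : Epi (dualSC f g h).g :=
    (ModuleCat.epi_iff_surjective _).2 (CharacterModule.dual_surjective_of_injective f hf)
  refine ShortComplex.ShortExact.mk ?_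
  rw [ShortComplex.moduleCat_exact_iff]
  intro (x : CharacterModule B) hx
  have hx' : ∀ a : A, x (f a) = 0 := fun a => DFunLike.congr_fun (F := CharacterModule A) hx a
  have hker : g.toAddMonoidHom.ker ≤ AddMonoidHom.ker (x : B →+ AddCircle (1:ℚ)) := by
    intro b hb
    obtain ⟨a, rfl⟩ := hfg (show b ∈ LinearMap.ker g from hb)
    exact hx' a
  let y : C →+ AddCircle (1:ℚ) := (g.toAddMonoidHom.liftOfSurjective hg) ⟨x, hker⟩
  refine ⟨(y : CharacterModule C), ?_⟩
  refine CharacterModule.ext B (fun b => ?_)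
  exact AddMonoidHom.liftOfRightInverse_comp_apply g.toAddMonoidHom _ (Function.rightInverse_surjInv hg) ⟨x, hker⟩ b

lemma flat_iff_ID (Q : Type u) [CommRing Q] (N : Type u) [AddCommGroup N] [Module Q N] :
    Module.Flat Q N ↔ ID Q 0 N := by
  rw [Module.Flat.iff_characterModule_injective, Module.injective_iff_injective_object,
    injective_iff_hasInjectiveDimensionLT_one]

lemma kerSC {Q : Type u} [CommRing Q] {F N : Type u} [AddCommGroup F] [AddCommGroup N]
    [Module Q F] [Module Q N] (f : F →ₗ[Q] N) : f ∘ₗ (LinearMap.ker f).subtype = 0 := by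
  ext x; exact x.2

lemma ID_ker {Q : Type u} [CommRing Q] {F N : Type u} [AddCommGroup F] [AddCommGroup N]
    [Module Q F] [Module Q N] (f : F →ₗ[Q] N) (hF : Module.Flat Q F) (hf : Function.Surjective f)
    (n : ℕ) : ID Q n (LinearMap.ker f) ↔ ID Q (n+1) N := by
  have h := dualSC_exact (LinearMap.ker f).subtype f (kerSC f) Subtype.val_injective hf
    (by rw [Submodule.range_subtype])
  exact h.hasInjectiveDimensionLT_X₃_iff n
    ((Module.injective_iff_injective_object _ _).1 (Module.Flat.iff_characterModule_injective.1 hF))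

lemma flatDimLE_iff (Q : Type u) [CommRing Q] (n : ℕ) : ∀ (N : Type u) [AddCommGroup N] [Module Q N],
    FlatDimLE Q n N ↔ ID Q n N := by
  induction n with
  | zero => intro N _ _; exact flat_iff_ID Q N
  | succ n ih =>
    intro N _ _
    constructor
    · rintro ⟨F, _, _, f, hF, hf, hk⟩
      exact (ID_ker f hF hf n).1 ((ih _).1 hk)
    · intro h
      have hs : Function.Surjective (Finsupp.linearCombination Q (id : N → N)) :=
        Finsupp.linearCombination_id_surjective Q N
      exact ⟨N →₀ Q, _, _, Finsupp.linearCombination Q (id : N → N), inferInstance, hs,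
        (ih _).2 ((ID_ker _ inferInstance hs n).2 h)⟩

lemma flatDimLE_equiv {Q : Type u} [CommRing Q] {n : ℕ} {N N' : Type u} [AddCommGroup N] [Module Q N]
    [AddCommGroup N'] [Module Q N'] (e : N ≃ₗ[Q] N') (h : FlatDimLE Q n N) : FlatDimLE Q n N' := by
  rw [flatDimLE_iff] at h ⊢
  exact hasInjectiveDimensionLT_of_iso (CharacterModule.congr e).toModuleIso _

lemma flatDimLE_cok {Q : Type u} [CommRing Q] {n : ℕ} {A B C : Type u} [AddCommGroup A] [AddCommGroup B]
    [AddCommGroup C] [Module Q A] [Module Q B] [Module Q C] (f : A →ₗ[Q] B) (g : B →ₗ[Q] C)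
    (h : g ∘ₗ f = 0) (hf : Function.Injective f) (hg : Function.Surjective g)
    (hfg : LinearMap.ker g ≤ LinearMap.range f) (hA : FlatDimLE Q n A) (hB : FlatDimLE Q n B) :
    FlatDimLE Q (n+1) C := by
  rw [flatDimLE_iff] at hA hB ⊢
  have hs := dualSC_exact f g h hf hg hfg
  exact hs.hasInjectiveDimensionLT_X₁ (n+1) hA (@hasInjectiveDimensionLT_of_ge _ _ _ _ (n+1) (n+1+1) (by omega) hB)

lemma flatDimLE_baseChange {A B : Type u} [CommRing A] [CommRing B] [Algebra A B] [Module.Flat A B]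
    (n : ℕ) : ∀ (N : Type u) [AddCommGroup N] [Module A N], FlatDimLE A n N →
      FlatDimLE B n (B ⊗[A] N) := by
  induction n with
  | zero =>
    intro N _ _ h
    have : Module.Flat A N := h
    exact (inferInstance : Module.Flat B (B ⊗[A] N))
  | succ n ih =>
    rintro N _ _ ⟨F, _, _, f, hF, hf, hk⟩
    refine ⟨B ⊗[A] F, _, _, f.baseChange B, inferInstance, ?_, ?_⟩
    · exact LinearMap.lTensor_surjective B hf
    · have h1 := ih _ hk
      have hinj : Function.Injective ((LinearMap.ker f).subtype.baseChange B) :=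
        Module.Flat.lTensor_preserves_injective_linearMap (M := B) (LinearMap.ker f).subtype Subtype.val_injective
      have hr : LinearMap.range ((LinearMap.ker f).subtype.baseChange B) = LinearMap.ker (f.baseChange B) := by
        have hex := lTensor_exact B (f := (LinearMap.ker f).subtype) (g := f)
          (LinearMap.exact_subtype_ker_map f) hf
        ext x
        exact (hex x).symm
      exact flatDimLE_equiv ((LinearEquiv.ofInjective _ hinj).trans (LinearEquiv.ofEq _ _ hr)) h1

end CIAscent

namespace CIAscent

lemma hilbert {Q D : Type u} [CommRing Q] [CommRing D] [Algebra Q D] (e : Polynomial Q ≃ₐ[Q] D)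
    (n : ℕ) (N : Type u) [AddCommGroup N] [Module Q N] [Module D N] [IsScalarTower Q D N]
    (h : FlatDimLE Q n N) : FlatDimLE D (n+1) N := by
  have hfl : Module.Flat Q D := Module.Flat.of_linearEquiv e.symm.toLinearEquiv
  have hb := flatDimLE_baseChange (B := D) n N h
  let x : D := e Polynomial.X
  let mu : D ⊗[Q] N →ₗ[D] N := (LinearMap.id : N →ₗ[Q] N).liftBaseChange D
  let d : D ⊗[Q] N →ₗ[D] D ⊗[Q] N :=
    x • (LinearMap.id : D ⊗[Q] N →ₗ[D] D ⊗[Q] N) - (Algebra.lsmul Q Q N x).baseChange D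
  have hmu : ∀ (a : D) (m : N), mu (a ⊗ₜ m) = a • m := fun a m => by simp [mu]
  have hd : ∀ (a : D) (m : N), d (a ⊗ₜ m) = (x * a) ⊗ₜ m - a ⊗ₜ (x • m) := fun a m => by
    simp [d, TensorProduct.smul_tmul']
  refine flatDimLE_cok d mu ?_ ?_ ?_ ?_ hb hb
  · ext m
    simp [hd, hmu]
  · let b : Module.Basis ℕ Q D := (Polynomial.basisMonomials Q).map e.toLinearEquiv
    let E := TensorProduct.equivFinsuppOfBasisLeft (N := N) b
    have hE : ∀ (a : D) (m : N) (i : ℕ), E (a ⊗ₜ m) i = (e.symm a).coeff i • m := fun a m i => by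
      rw [TensorProduct.equivFinsuppOfBasisLeft_apply_tmul_apply]
      congr 1
    have key : ∀ (z : D ⊗[Q] N) (i : ℕ), E (d z) (i+1) = E z i - x • E z (i+1) := by
      intro z i
      induction z with
      | zero => simp
      | add z w hz hw => simp only [map_add, Finsupp.add_apply, hz, hw, smul_add]; abel
      | tmul a m =>
        rw [hd, map_sub, Finsupp.sub_apply, hE, hE, hE, hE]
        have : e.symm (x * a) = Polynomial.X * e.symm a := by simp [x]
        rw [this, Polynomial.coeff_X_mul, smul_comm]
    rw [← LinearMap.ker_eq_bot, LinearMap.ker_eq_bot']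
    intro z hz
    apply E.injective
    rw [map_zero]
    have h1 : ∀ i, E z i = x • E z (i+1) := fun i => by
      have := key z i
      rw [hz, map_zero, Finsupp.zero_apply] at this
      exact (sub_eq_zero.1 this.symm)
    obtain ⟨B, hB⟩ : ∃ B, ∀ i, B ≤ i → E z i = 0 := by
      refine ⟨(E z).support.sup id + 1, fun i hi => ?_⟩
      by_contra hne
      have := Finset.le_sup (f := id) (Finsupp.mem_support_iff.2 hne)
      simp only [id] at this
      omega
    have h2 : ∀ k i, B ≤ i + k → E z i = 0 := by
      intro k
      induction k with
      | zero => intro i hi; exact hB i hi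
      | succ k ih => intro i hi; rw [h1, ih (i+1) (by omega), smul_zero]
    ext i
    exact h2 B i (by omega)
  · intro m; exact ⟨1 ⊗ₜ m, by simp [hmu]⟩
  · have hp : ∀ (p : Polynomial Q) (m : N), e p ⊗ₜ[Q] m - 1 ⊗ₜ (e p • m) ∈ LinearMap.range d := by
      intro p
      induction p using Polynomial.induction_on' with
      | add p q hp hq =>
        intro m
        have := add_mem (hp m) (hq m)
        rw [map_add, add_tmul, add_smul, tmul_add]
        convert this using 1
        abel
      | monomial k a =>
        induction k with
        | zero =>
          intro m
          have h0 : e (Polynomial.monomial 0 a) = algebraMap Q D a := by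
            rw [Polynomial.monomial_zero_left]; exact e.commutes a
          rw [h0, algebraMap_smul, tmul_smul, Algebra.algebraMap_eq_smul_one, smul_tmul', sub_self]
          exact zero_mem _
        | succ k ih =>
          intro m
          have hx : e (Polynomial.monomial (k+1) a) = x * e (Polynomial.monomial k a) := by
            rw [← map_mul, Polynomial.X_mul_monomial]
          have h1 := ih (x • m)
          have h2 : d (e (Polynomial.monomial k a) ⊗ₜ m) ∈ LinearMap.range d := ⟨_, rfl⟩
          have := add_mem h2 h1
          rw [hd] at this
          rw [hx, mul_comm x, mul_smul, mul_comm _ x]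
          convert this using 1
          abel
    have hz : ∀ z : D ⊗[Q] N, z - 1 ⊗ₜ mu z ∈ LinearMap.range d := by
      intro z
      induction z with
      | zero => simp
      | add z w hz hw =>
        have := add_mem hz hw
        rw [map_add, tmul_add]
        convert this using 1
        abel
      | tmul a m =>
        have := hp (e.symm a) m
        rw [e.apply_symm_apply] at this
        rwa [hmu]
    intro z hz0
    have := hz z
    rw [LinearMap.mem_ker.1 hz0, tmul_zero, sub_zero] at this
    exact this

lemma flatDim_bij {Q D : Type u} [CommRing Q] [CommRing D] [Algebra Q D] (e : Q ≃ₐ[Q] D)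
    (n : ℕ) (N : Type u) [AddCommGroup N] [Module Q N] [Module D N] [IsScalarTower Q D N]
    (h : FlatDimLE Q n N) : FlatDimLE D n N := by
  have hfl : Module.Flat Q D := Module.Flat.of_linearEquiv e.symm.toLinearEquiv
  have hb := flatDimLE_baseChange (B := D) n N h
  let mu : D ⊗[Q] N →ₗ[D] N := (LinearMap.id : N →ₗ[Q] N).liftBaseChange D
  have hmu : ∀ (a : D) (m : N), mu (a ⊗ₜ m) = a • m := fun a m => by simp [mu]
  have h1 : ∀ z : D ⊗[Q] N, z = 1 ⊗ₜ mu z := by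
    intro z
    induction z with
    | zero => simp
    | add z w hz hw => rw [map_add, tmul_add, ← hz, ← hw]
    | tmul a m =>
      obtain ⟨q, rfl⟩ := e.surjective a
      have : e q = algebraMap Q D q := e.commutes q
      rw [hmu, this, algebraMap_smul, tmul_smul, Algebra.algebraMap_eq_smul_one, smul_tmul']
  refine flatDimLE_equiv (LinearEquiv.ofBijective mu ⟨?_, ?_⟩) hb
  · intro z w hzw; rw [h1 z, h1 w, hzw]
  · intro m; exact ⟨1 ⊗ₜ m, by simp [hmu]⟩

lemma hilbert_mv {Q : Type u} [CommRing Q] (n : ℕ) : ∀ (N : Type u) [AddCommGroup N] [Module Q N]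
    [Module (MvPolynomial (Fin n) Q) N] [IsScalarTower Q (MvPolynomial (Fin n) Q) N],
    FlatDimFinite Q N → FlatDimFinite (MvPolynomial (Fin n) Q) N := by
  induction n with
  | zero =>
    rintro N _ _ _ _ ⟨k, hk⟩
    exact ⟨k, flatDim_bij (MvPolynomial.isEmptyAlgEquiv Q (Fin 0)).symm k N hk⟩
  | succ n ih =>
    intro N _ _ _ _ h
    let A := MvPolynomial (Fin n) Q
    let D := MvPolynomial (Fin (n+1)) Q
    let j : A →+* D := ((MvPolynomial.finSuccEquiv Q n).symm : Polynomial A ≃ₐ[Q] D).toRingEquiv.toRingHom.comp Polynomial.C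
    letI : Algebra A D := j.toAlgebra
    letI : Module A N := Module.compHom N j
    have t1 : IsScalarTower A D N := ⟨fun a b c => by
      rw [Algebra.smul_def, mul_smul]; rfl⟩
    have t2 : IsScalarTower Q A N := IsScalarTower.of_algebraMap_smul fun q m => by
      change (MvPolynomial.finSuccEquiv Q n).symm (Polynomial.C (algebraMap Q A q)) • m = q • m
      have : (MvPolynomial.finSuccEquiv Q n).symm (Polynomial.C (algebraMap Q A q)) = algebraMap Q D q :=
        (MvPolynomial.finSuccEquiv Q n).symm.commutes q
      rw [this, algebraMap_smul]
    obtain ⟨k, hk⟩ := ih N h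
    let e : Polynomial A ≃ₐ[A] D :=
      AlgEquiv.ofRingEquiv (f := ((MvPolynomial.finSuccEquiv Q n).symm : Polynomial A ≃ₐ[Q] D).toRingEquiv)
        (fun a => rfl)
    exact ⟨k+1, hilbert e k N hk⟩

end CIAscent

namespace CIAscent
open CategoryTheory

lemma projDimLE_of (Q : Type u) [CommRing Q] (n : ℕ) : ∀ (N : Type u) [AddCommGroup N] [Module Q N],
    HasProjectiveDimensionLT (ModuleCat.of Q N) (n+1) → ProjDimLE Q n N := by
  induction n with
  | zero =>
    intro N _ _ h
    exact (IsProjective.iff_projective N).2 (projective_iff_hasProjectiveDimensionLT_one.2 h)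
  | succ n ih =>
    intro N _ _ h
    let f := Finsupp.linearCombination Q (id : N → N)
    have hs : Function.Surjective f := Finsupp.linearCombination_id_surjective Q N
    refine ⟨N →₀ Q, _, _, f, inferInstance, hs, ih _ ?_⟩
    let S : ShortComplex (ModuleCat.{u} Q) :=
      ShortComplex.mk (X₁ := ModuleCat.of Q (LinearMap.ker f)) (X₂ := ModuleCat.of Q (N →₀ Q))
        (X₃ := ModuleCat.of Q N) (ModuleCat.ofHom (LinearMap.ker f).subtype) (ModuleCat.ofHom f)
        (by ext x; exact x.2)
    have hm : Mono S.f := (ModuleCat.mono_iff_injective _).2 Subtype.val_injective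
    have he : Epi S.g := (ModuleCat.epi_iff_surjective _).2 hs
    have hS : S.ShortExact := by
      refine ShortComplex.ShortExact.mk ?_
      rw [ShortComplex.moduleCat_exact_iff]
      intro x hx
      exact ⟨⟨x, hx⟩, rfl⟩
    have hp : Projective S.X₂ := (IsProjective.iff_projective (N →₀ Q)).1 inferInstance
    exact (hS.hasProjectiveDimensionLT_X₃_iff n hp).1 h

lemma projDimFinite_of_regular {P S' : Type u} [CommRing P] [CommRing S'] [IsLocalRing P]
    [IsNoetherianRing P] [Algebra P S'] (hs : Function.Surjective (algebraMap P S'))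
    (rs : List P) (reg : RingTheory.Sequence.IsRegular P rs)
    (hk : RingHom.ker (algebraMap P S') = Ideal.ofList rs) : ProjDimFinite P S' := by
  have h := ModuleCat.projectiveDimension_quotient_eq_length.{u} rs reg
  have h1 : HasProjectiveDimensionLE (ModuleCat.of P (Shrink.{u} (P ⧸ Ideal.ofList rs))) rs.length := by
    rw [← projectiveDimension_le_iff, h]
  let e0 : (P ⧸ Ideal.ofList rs) ≃ₗ[P] S' :=
    (Submodule.quotEquivOfEq _ _ (by ext x; rw [← hk]; rfl)).trans
      ((Algebra.linearMap P S').quotKerEquivOfSurjective hs)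
  let e : Shrink.{u} (P ⧸ Ideal.ofList rs) ≃ₗ[P] S' := (Shrink.linearEquiv P _).trans e0
  have h2 := hasProjectiveDimensionLT_of_iso e.toModuleIso (rs.length + 1)
  exact ⟨rs.length, projDimLE_of P _ S' h2⟩

end CIAscent

namespace CIAscent
open RingTheory.Sequence

lemma mk_ci (S S' P M : Type u) [CommRing S] [CommRing S'] [CommRing P] [AddCommGroup M] [Module S M]
    [iS : Algebra S S'] [iP : Algebra P S'] [IsLocalRing S'] [IsLocalRing P] [IsNoetherianRing S']
    [IsNoetherianRing P] (hl : IsLocalHom (algebraMap S S')) [hfl : Module.Flat S S']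
    (hs : Function.Surjective (algebraMap P S')) (rs : List P) (reg : IsRegular P rs)
    (hk : RingHom.ker (algebraMap P S') = Ideal.ofList rs)
    (N : Type u) [AddCommGroup N] [Module P N] (hN : FlatDimFinite P N)
    (e : N ≃+ S' ⊗[S] M) (he : ∀ (p : P) (x : N), e (p • x) = algebraMap P S' p • e x) :
    HasFiniteCIDim S M := by
  obtain ⟨f, rfl⟩ : ∃ f : S →+* S', iS = f.toAlgebra := ⟨algebraMap S S', toAlgebra_algebraMap.symm⟩
  obtain ⟨g, rfl⟩ : ∃ g : P →+* S', iP = g.toAlgebra := ⟨algebraMap P S', toAlgebra_algebraMap.symm⟩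
  letI := f.toAlgebra
  letI := g.toAlgebra
  have hg : IsLocalHom g := Function.Surjective.isLocalHom g hs
  refine ⟨S', P, inferInstance, inferInstance, f, g, ⟨inferInstance, inferInstance, inferInstance,
    inferInstance, hl, hg, hfl, hs, rs, reg, hk.symm⟩, ?_, ?_⟩
  · letI : Module P (S' ⊗[S] M) := Module.compHom _ g
    obtain ⟨n, hn⟩ := hN
    exact ⟨n, flatDimLE_equiv (e.toLinearEquiv he) hn⟩
  · exact projDimFinite_of_regular hs rs reg hk

lemma step_b (B D' D A1 W P S S' M : Type u) [CommRing B] [CommRing D'] [CommRing D] [CommRing A1]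
    [CommRing W] [CommRing P] [CommRing S] [CommRing S'] [AddCommGroup M]
    [Algebra B D'] [Algebra D D'] [Algebra D P] [Algebra D W] [Algebra P W] [Algebra D' W]
    [IsScalarTower D P W] [IsScalarTower D D' W] [Algebra.IsPushout D P D' W]
    [Algebra B A1] [Algebra B W] [Algebra A1 W] [IsScalarTower B A1 W] [IsScalarTower B D' W]
    (T : Submonoid B) [IsLocalization T A1]
    [Algebra A1 S] [Algebra A1 S'] [Algebra S S'] [Algebra W S'] [IsScalarTower A1 S S']
    [IsScalarTower A1 W S'] [Algebra.IsPushout A1 W S S']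
    [Module B M] [Module A1 M] [Module S M] [IsScalarTower B A1 M] [IsScalarTower A1 S M]
    [Algebra P S'] [IsScalarTower P W S']
    (N : Type u) [AddCommGroup N] [Module D' N] [Module D N] [IsScalarTower D D' N]
    (e0 : N ≃ₗ[D'] D' ⊗[B] M) :
    ∃ e : P ⊗[D] N ≃+ S' ⊗[S] M, ∀ (p : P) x, e (p • x) = algebraMap P S' p • e x := by
  let e1 : W ⊗[D'] N ≃ₗ[P] P ⊗[D] N :=
    Algebra.IsPushout.cancelBaseChange D P D' W N
  let e0' : W ⊗[D'] N ≃ₗ[W] W ⊗[D'] (D' ⊗[B] M) :=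
    TensorProduct.AlgebraTensorModule.congr (LinearEquiv.refl W W) e0
  let e2 : W ⊗[D'] (D' ⊗[B] M) ≃ₗ[W] W ⊗[B] M :=
    TensorProduct.AlgebraTensorModule.cancelBaseChange B D' W W M
  have hc : CompatibleSMul B A1 W M := IsLocalization.tensorProduct_compatibleSMul T A1 W M
  let e3 : W ⊗[A1] M ≃ₗ[W] W ⊗[B] M := TensorProduct.equivOfCompatibleSMul B A1 W W M
  let e4 : S' ⊗[S] M ≃ₗ[W] W ⊗[A1] M := Algebra.IsPushout.cancelBaseChange A1 W S S' M
  let e5 : W ⊗[D'] N ≃ₗ[W] S' ⊗[S] M := ((e0'.trans e2).trans e3.symm).trans e4.symm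
  refine ⟨e1.symm.toAddEquiv.trans e5.toAddEquiv, fun p x => ?_⟩
  change e5 (e1.symm (p • x)) = algebraMap P S' p • e5 (e1.symm x)
  rw [map_smul e1.symm, ← algebraMap_smul W p (e1.symm x), map_smul e5, IsScalarTower.algebraMap_apply P W S']
  exact (algebraMap_smul S' (algebraMap P W p) _).symm

lemma step_a' (R' Q : Type u) (n : ℕ) [CommRing R'] [CommRing Q] [Algebra Q R']
    (N0 : Type u) [AddCommGroup N0] [Module R' N0] [Module Q N0] [IsScalarTower Q R' N0]
    (h : FlatDimFinite Q N0) (N : Type u) [AddCommGroup N] [Module R' N]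
    [Module (MvPolynomial (Fin n) R') N] [IsScalarTower R' (MvPolynomial (Fin n) R') N]
    [Module (MvPolynomial (Fin n) Q) N]
    (hD : ∀ (p : MvPolynomial (Fin n) Q) (x : N), p • x = MvPolynomial.map (algebraMap Q R') p • x)
    (e1 : N ≃ₗ[R'] N0) :
    FlatDimFinite (MvPolynomial (Fin n) Q) N := by
  letI m2 : Module Q N := Module.compHom _ (algebraMap Q R')
  have t1 : IsScalarTower Q (MvPolynomial (Fin n) Q) N := IsScalarTower.of_algebraMap_smul fun q x => by
    rw [hD]
    change (MvPolynomial.map (algebraMap Q R') (MvPolynomial.C q) : MvPolynomial (Fin n) R') • x = algebraMap Q R' q • x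
    rw [MvPolynomial.map_C]
    exact algebraMap_smul (MvPolynomial (Fin n) R') (algebraMap Q R' q) x
  have h1 : FlatDimFinite Q N := by
    obtain ⟨k, hk⟩ := h
    refine ⟨k, flatDimLE_equiv (e1.symm.toAddEquiv.toLinearEquiv fun q x => ?_) hk⟩
    change e1.symm (q • x) = algebraMap Q R' q • e1.symm x
    rw [← algebraMap_smul R' q x, map_smul]
  exact hilbert_mv n N h1

end CIAscent

namespace CIAscent
open RingTheory.Sequence
attribute [local instance] MvPolynomial.algebraMvPolynomial Algebra.TensorProduct.rightAlgebra

lemma ker_incl (A1 S W : Type u) [CommRing A1] [CommRing S] [CommRing W] [Algebra A1 S] [Algebra A1 W]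
    (hπ : Function.Surjective (algebraMap A1 S)) :
    Function.Surjective (algebraMap W (S ⊗[A1] W)) ∧
    RingHom.ker (algebraMap W (S ⊗[A1] W)) = (RingHom.ker (algebraMap A1 S)).map (algebraMap A1 W) := by
  have hf : Function.Surjective (Algebra.ofId A1 S) := hπ
  have h := Algebra.TensorProduct.rTensor_ker (R := A1) (C := W) (Algebra.ofId A1 S) hf
  have hw : ∀ w, algebraMap W (S ⊗[A1] W) w = 1 ⊗ₜ w := fun w => rfl
  constructor
  · intro z
    induction z with
    | zero => exact ⟨0, map_zero _⟩
    | add x y hx hy =>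
      obtain ⟨a, rfl⟩ := hx
      obtain ⟨b, rfl⟩ := hy
      exact ⟨a+b, map_add _ _ _⟩
    | tmul s w =>
      obtain ⟨a, rfl⟩ := hπ s
      refine ⟨a • w, ?_⟩
      rw [hw, ← smul_tmul, Algebra.algebraMap_eq_smul_one]
  · let e : A1 ⊗[A1] W ≃ₐ[A1] W := Algebra.TensorProduct.lid A1 W
    have hc : ∀ w, algebraMap W (S ⊗[A1] W) w =
        Algebra.TensorProduct.map (Algebra.ofId A1 S) (AlgHom.id A1 W) (e.symm w) := fun w => by
      simp [e, hw]
    apply le_antisymm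
    · intro w hw0
      have h1 : e.symm w ∈ RingHom.ker (Algebra.TensorProduct.map (Algebra.ofId A1 S) (AlgHom.id A1 W)) := by
        rw [RingHom.mem_ker, ← hc]; exact hw0
      rw [h] at h1
      have h2 : Ideal.map (Algebra.TensorProduct.includeLeft : A1 →ₐ[A1] A1 ⊗[A1] W) (RingHom.ker (Algebra.ofId A1 S))
          ≤ Ideal.comap (e : A1 ⊗[A1] W →+* W) ((RingHom.ker (algebraMap A1 S)).map (algebraMap A1 W)) := by
        rw [Ideal.map_le_iff_le_comap]
        intro a ha
        rw [Ideal.mem_comap, Ideal.mem_comap]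
        have : (e : A1 ⊗[A1] W →+* W) ((Algebra.TensorProduct.includeLeft : A1 →ₐ[A1] A1 ⊗[A1] W) a)
            = algebraMap A1 W a := by
          simp [e, Algebra.algebraMap_eq_smul_one]
        rw [this]
        exact Ideal.mem_map_of_mem _ ha
      have h4 : (e : A1 ⊗[A1] W →+* W) (e.symm w) = w := e.apply_symm_apply w
      have h5 := h2 h1
      rw [Ideal.mem_comap, h4] at h5
      exact h5
    · rw [Ideal.map_le_iff_le_comap]
      intro a ha
      rw [RingHom.mem_ker] at ha
      rw [Ideal.mem_comap, RingHom.mem_ker, hw, Algebra.algebraMap_eq_smul_one, ← smul_tmul,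
        ← Algebra.algebraMap_eq_smul_one, ha, zero_tmul]

lemma ring_part (A1 S W P : Type u) [CommRing A1] [CommRing S] [CommRing W] [CommRing P]
    [Algebra A1 S] [Algebra A1 W] [Algebra P W] [IsLocalRing A1] [IsLocalRing W] [IsLocalRing S]
    [IsLocalRing P] [IsNoetherianRing W] [Module.Flat A1 W] [IsLocalHom (algebraMap A1 W)]
    (hπ : Function.Surjective (algebraMap A1 S)) (g : List A1) (hg : IsRegular A1 g)
    (hgk : RingHom.ker (algebraMap A1 S) = Ideal.ofList g)
    (hP : Function.Surjective (algebraMap P W)) (r : List P) (hr : IsWeaklyRegular P r)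
    (hrk : RingHom.ker (algebraMap P W) = Ideal.ofList r) :
    IsLocalRing (S ⊗[A1] W) ∧ IsNoetherianRing (S ⊗[A1] W) ∧
    IsLocalHom (algebraMap S (S ⊗[A1] W)) ∧
    Function.Surjective ((algebraMap W (S ⊗[A1] W)).comp (algebraMap P W)) ∧
    ∃ rs : List P, IsRegular P rs ∧
      RingHom.ker ((algebraMap W (S ⊗[A1] W)).comp (algebraMap P W)) = Ideal.ofList rs := by
  obtain ⟨hs, hk⟩ := ker_incl A1 S W hπ
  have hnt : Nontrivial (S ⊗[A1] W) := by
    by_contra hsub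
    rw [not_nontrivial_iff_subsingleton] at hsub
    have h1 : (1 : W) ∈ RingHom.ker (algebraMap W (S ⊗[A1] W)) := Subsingleton.elim _ _
    rw [hk] at h1
    have h2 : (RingHom.ker (algebraMap A1 S)).map (algebraMap A1 W) ≤ maximalIdeal W := by
      rw [Ideal.map_le_iff_le_comap]
      intro a ha
      have : a ∈ maximalIdeal A1 := IsLocalRing.le_maximalIdeal (RingHom.ker_ne_top _) ha
      exact loc_map (algebraMap A1 W) a this
    exact (Ideal.ne_top_iff_one _).1 (maximalIdeal.isMaximal W).ne_top (h2 h1)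
  have hS' : IsLocalRing (S ⊗[A1] W) := IsLocalRing.of_surjective' _ hs
  have hlW : IsLocalHom (algebraMap W (S ⊗[A1] W)) := Function.Surjective.isLocalHom _ hs
  refine ⟨hS', isNoetherianRing_of_surjective _ _ _ hs, ⟨fun s hsu => ?_⟩, hs.comp hP, ?_⟩
  · obtain ⟨a, rfl⟩ := hπ s
    have : algebraMap S (S ⊗[A1] W) (algebraMap A1 S a) = algebraMap W (S ⊗[A1] W) (algebraMap A1 W a) := by
      rw [← IsScalarTower.algebraMap_apply, ← IsScalarTower.algebraMap_apply]
    rw [this] at hsu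
    exact ((hsu.of_map _ _).of_map _ _).map _
  · obtain ⟨l, hl⟩ := exists_map_eq (algebraMap P W) hP (g.map (algebraMap A1 W))
    have hw2 : IsWeaklyRegular W (g.map (algebraMap A1 W)) := hg.toIsWeaklyRegular.of_flat
    rw [hgk, map_ofList, ← hl] at hk
    rw [← hl] at hw2
    obtain ⟨h1, h2⟩ := weaklyRegular_comp (algebraMap P W) hP (algebraMap W (S ⊗[A1] W)) r l hrk hk hr hw2
    refine ⟨r ++ l, isRegular_of_weakly h1 ?_, h2⟩
    rw [← h2]
    exact IsLocalRing.le_maximalIdeal (RingHom.ker_ne_top _)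

lemma main_abs (R R' Q S M A1 W P : Type u) (n : ℕ) [CommRing R] [CommRing R'] [CommRing Q]
    [CommRing S] [CommRing A1] [CommRing W] [CommRing P] [AddCommGroup M]
    [Algebra R R'] [Algebra Q R']
    [Algebra (MvPolynomial (Fin n) Q) P] [Algebra (MvPolynomial (Fin n) Q) W] [Algebra P W]
    [Algebra (MvPolynomial (Fin n) R') W] [IsScalarTower (MvPolynomial (Fin n) Q) P W]
    [IsScalarTower (MvPolynomial (Fin n) Q) (MvPolynomial (Fin n) R') W]
    [Algebra.IsPushout (MvPolynomial (Fin n) Q) P (MvPolynomial (Fin n) R') W]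
    [Module.Flat (MvPolynomial (Fin n) Q) P]
    [Algebra (MvPolynomial (Fin n) R) A1] [Algebra (MvPolynomial (Fin n) R) W] [Algebra A1 W]
    [IsScalarTower (MvPolynomial (Fin n) R) A1 W]
    [IsScalarTower (MvPolynomial (Fin n) R) (MvPolynomial (Fin n) R') W]
    (T : Submonoid (MvPolynomial (Fin n) R)) [IsLocalization T A1]
    [Module R M] [Module (MvPolynomial (Fin n) R) M] [Module A1 M] [Module S M]
    [IsScalarTower R (MvPolynomial (Fin n) R) M] [IsScalarTower (MvPolynomial (Fin n) R) A1 M]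
    [Algebra A1 S] [IsScalarTower A1 S M]
    [IsLocalRing A1] [IsLocalRing W] [IsLocalRing S]
    [IsLocalRing P] [IsNoetherianRing W] [IsNoetherianRing P]
    [Module.Flat A1 W] [IsLocalHom (algebraMap A1 W)]
    (hπ : Function.Surjective (algebraMap A1 S)) (g : List A1) (hg : IsRegular A1 g)
    (hgk : RingHom.ker (algebraMap A1 S) = Ideal.ofList g)
    (hP : Function.Surjective (algebraMap P W)) (r : List P) (hr : IsWeaklyRegular P r)
    (hrk : RingHom.ker (algebraMap P W) = Ideal.ofList r)
    (N0 : Type u) [AddCommGroup N0] [Module R' N0] [Module Q N0] [IsScalarTower Q R' N0]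
    (e0 : N0 ≃ₗ[R'] R' ⊗[R] M) (h : FlatDimFinite Q N0) : HasFiniteCIDim S M := by
  obtain ⟨i1, i2, i3, hs, rs, hrs, hkrs⟩ := ring_part A1 S W P hπ g hg hgk hP r hr hrk
  obtain ⟨N, _, _, _, _, e, e1⟩ : ∃ (N : Type u) (_ : AddCommGroup N) (_ : Module (MvPolynomial (Fin n) R') N)
      (_ : Module R' N) (_ : IsScalarTower R' (MvPolynomial (Fin n) R') N)
      (e : N ≃ₗ[MvPolynomial (Fin n) R'] MvPolynomial (Fin n) R' ⊗[MvPolynomial (Fin n) R] M),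
      Nonempty (N ≃ₗ[R'] N0) :=
    ⟨MvPolynomial (Fin n) R' ⊗[MvPolynomial (Fin n) R] M, inferInstance, inferInstance, inferInstance,
      inferInstance, LinearEquiv.refl _ _,
      ⟨(Algebra.IsPushout.cancelBaseChange R R' (MvPolynomial (Fin n) R) (MvPolynomial (Fin n) R') M).trans e0.symm⟩⟩
  obtain ⟨e1⟩ := e1
  letI : Module (MvPolynomial (Fin n) Q) N := Module.compHom _ (MvPolynomial.map (algebraMap Q R'))
  obtain ⟨k, hk⟩ := step_a' R' Q n N0 h N (fun _ _ => rfl) e1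
  have t : IsScalarTower (MvPolynomial (Fin n) Q) (MvPolynomial (Fin n) R') N :=
    IsScalarTower.of_algebraMap_smul fun _ _ => rfl
  letI : Algebra P (S ⊗[A1] W) := ((algebraMap W (S ⊗[A1] W)).comp (algebraMap P W)).toAlgebra
  have t2 : IsScalarTower P W (S ⊗[A1] W) := IsScalarTower.of_algebraMap_eq fun _ => rfl
  obtain ⟨E, hE⟩ := step_b (MvPolynomial (Fin n) R) (MvPolynomial (Fin n) R') (MvPolynomial (Fin n) Q)
    A1 W P S (S ⊗[A1] W) M T N e
  exact mk_ci S (S ⊗[A1] W) P M i3 hs rs hrs hkrs _ ⟨k, flatDimLE_baseChange k N hk⟩ E hE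

end CIAscent

namespace CIAscent
open RingTheory.Sequence

lemma geom (B D' D : Type u) [CommRing B] [CommRing D'] [CommRing D] [Algebra B D'] [Algebra D D']
    [Module.FaithfullyFlat B D'] [IsNoetherianRing D'] [IsNoetherianRing D]
    (hs : Function.Surjective (algebraMap D D')) (p : Ideal B) [p.IsPrime] :
    ∃ (W P : Type u) (_ : CommRing W) (_ : CommRing P) (_ : Algebra D P) (_ : Algebra D W)
      (_ : Algebra P W) (_ : Algebra D' W) (_ : IsScalarTower D P W) (_ : IsScalarTower D D' W)
      (_ : Algebra B W) (_ : Algebra (Localization.AtPrime p) W)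
      (_ : IsScalarTower B (Localization.AtPrime p) W) (_ : IsScalarTower B D' W),
      Algebra.IsPushout D P D' W ∧ Module.Flat D P ∧ IsLocalRing W ∧ IsLocalRing P ∧
      IsNoetherianRing W ∧ IsNoetherianRing P ∧ Module.Flat (Localization.AtPrime p) W ∧
      IsLocalHom (algebraMap (Localization.AtPrime p) W) ∧ Function.Surjective (algebraMap P W) ∧
      RingHom.ker (algebraMap P W) = (RingHom.ker (algebraMap D D')).map (algebraMap D P) := by
  obtain ⟨⟨q, hq⟩, hqp⟩ := PrimeSpectrum.comap_surjective_of_faithfullyFlat (A := B) (B := D') ⟨p, ‹_›⟩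
  have hpq : p = q.comap (algebraMap B D') := by
    have := congrArg PrimeSpectrum.asIdeal hqp
    exact this.symm
  let q0 := q.comap (algebraMap D D')
  have hq0 : q0.IsPrime := inferInstance
  have hsub : Algebra.algebraMapSubmonoid D' q0.primeCompl = q.primeCompl := by
    ext x
    constructor
    · rintro ⟨y, hy, rfl⟩; exact hy
    · intro hx; obtain ⟨y, rfl⟩ := hs x; exact ⟨y, hx, rfl⟩
  have hfl : (algebraMap B D').Flat := by
    rw [RingHom.flat_algebraMap_iff]; infer_instance
  have hk := localRingHom_surj (algebraMap D D') hs q0 q rfl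
  obtain ⟨W, P, _, _, _, _, _, _, _, _, _, _, fP, fA, e1, e2, hk1, hk2, hfA, hlA⟩ :
      ∃ (W P : Type u) (_ : CommRing W) (_ : CommRing P) (_ : Algebra D' W) (_ : Algebra D P)
      (_ : IsLocalization q.primeCompl W) (_ : IsLocalization q0.primeCompl P)
      (_ : IsLocalRing W) (_ : IsLocalRing P) (_ : IsNoetherianRing W) (_ : IsNoetherianRing P)
      (fP : P →+* W) (fA : Localization.AtPrime p →+* W),
      (∀ x, fP (algebraMap D P x) = algebraMap D' W (algebraMap D D' x)) ∧
      (∀ x, fA (algebraMap B _ x) = algebraMap D' W (algebraMap B D' x)) ∧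
      Function.Surjective fP ∧ RingHom.ker fP = (RingHom.ker (algebraMap D D')).map (algebraMap D P) ∧
      fA.Flat ∧ IsLocalHom fA :=
    ⟨Localization.AtPrime q, Localization.AtPrime q0, inferInstance, inferInstance, inferInstance,
      inferInstance, inferInstance, inferInstance, inferInstance, inferInstance,
      IsLocalization.isNoetherianRing q.primeCompl _ inferInstance,
      IsLocalization.isNoetherianRing q0.primeCompl _ inferInstance,
      Localization.localRingHom q0 q (algebraMap D D') rfl,
      Localization.localRingHom p q (algebraMap B D') hpq,
      Localization.localRingHom_to_map _ _ _ rfl, Localization.localRingHom_to_map _ _ _ hpq,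
      hk.1, hk.2, hfl.localRingHom q p hpq, Localization.isLocalHom_localRingHom p q _ hpq⟩
  letI a1 : Algebra D W := ((algebraMap D' W).comp (algebraMap D D')).toAlgebra
  letI a2 : Algebra B W := ((algebraMap D' W).comp (algebraMap B D')).toAlgebra
  letI a3 : Algebra P W := fP.toAlgebra
  letI a4 : Algebra (Localization.AtPrime p) W := fA.toAlgebra
  have t1 : IsScalarTower D P W := .of_algebraMap_eq fun x ↦ (e1 x).symm
  have t2 : IsScalarTower D D' W := .of_algebraMap_eq fun x ↦ rfl
  have t3 : IsScalarTower B (Localization.AtPrime p) W := .of_algebraMap_eq fun x ↦ (e2 x).symm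
  have t4 : IsScalarTower B D' W := .of_algebraMap_eq fun x ↦ rfl
  have hloc : IsLocalization (Algebra.algebraMapSubmonoid D' q0.primeCompl) W := by
    rw [hsub]; infer_instance
  have hpo : Algebra.IsPushout D D' P W := (Algebra.isPushout_of_isLocalization q0.primeCompl _ _ _)
  exact ⟨W, P, inferInstance, inferInstance, inferInstance,
    a1, a3, inferInstance, t1, t2, a2, a4, t3, t4, hpo.symm, IsLocalization.flat _ q0.primeCompl,
    inferInstance, inferInstance, inferInstance, inferInstance, hfA, hlA, hk1, hk2⟩

attribute [local instance] MvPolynomial.algebraMvPolynomial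

lemma ff_mv (R R' : Type u) (n : ℕ) [CommRing R] [CommRing R'] [Algebra R R'] [Module.FaithfullyFlat R R'] :
    Module.FaithfullyFlat (MvPolynomial (Fin n) R) (MvPolynomial (Fin n) R') :=
  Module.FaithfullyFlat.of_linearEquiv _ _ 
    (Algebra.IsPushout.equiv R (MvPolynomial (Fin n) R) R' (MvPolynomial (Fin n) R')).toLinearEquiv.symm

lemma final (R S M : Type u) [CommRing R] [CommRing S]
  [IsLocalRing R] [IsLocalRing S] [IsNoetherianRing R] [IsNoetherianRing S]
  [Algebra R S] [IsLocalHom (algebraMap R S)]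
  [AddCommGroup M] [Module R M] [Module S M] [IsScalarTower R S M]
  [Module.Flat R S] [Algebra.EssFiniteType R S]
    (hci : IsCIAt R S (algebraMap R S) (maximalIdeal S))
    (hfd : HasFiniteCIDim R M) :
    HasFiniteCIDim S M := by
  obtain ⟨n, p, hp, π, hπ, g, hg, hgk⟩ := presentation R S hci
  obtain ⟨R', Q, _, _, f, gq, ⟨h1, h2, h3, h4, h5, h6, h7, h8, r0, hr0, hr0k⟩, hfd, -⟩ := hfd
  letI := f.toAlgebra
  have : Module.Flat R R' := h7
  obtain ⟨N0, _, _, _, e0, h, hsm⟩ : ∃ (N0 : Type u) (_ : AddCommGroup N0) (_ : Module R' N0) (_ : Module Q N0)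
      (e0 : N0 ≃ₗ[R'] R' ⊗[R] M), FlatDimFinite Q N0 ∧ ∀ (q : Q) (x : N0), q • x = gq q • x := by
    letI : Module Q (R' ⊗[R] M) := Module.compHom _ gq
    exact ⟨R' ⊗[R] M, inferInstance, inferInstance, this, LinearEquiv.refl _ _, hfd, fun _ _ => rfl⟩
  letI := gq.toAlgebra
  have : IsScalarTower Q R' N0 := IsScalarTower.of_algebraMap_smul fun q x => (hsm q x).symm
  have : IsLocalHom (algebraMap R R') := h5
  have : Module.FaithfullyFlat R R' := Module.FaithfullyFlat.of_flat_of_isLocalHom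
  have := ff_mv R R' n
  have hker := MvPolynomial.ker_map (σ := Fin n) gq
  have hsD : Function.Surjective (algebraMap (MvPolynomial (Fin n) Q) (MvPolynomial (Fin n) R')) :=
    MvPolynomial.map_surjective gq h8
  obtain ⟨W, P, _, _, _, _, _, _, _, _, _, _, _, _, _, _, _, _, _, _, _, _, hP, hPk⟩ :=
    geom (MvPolynomial (Fin n) R) (MvPolynomial (Fin n) R') (MvPolynomial (Fin n) Q) hsD p
  letI : Algebra (Localization.AtPrime p) S := π.toRingHom.toAlgebra
  letI : Module (Localization.AtPrime p) M := Module.compHom M π.toRingHom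
  letI : Module (MvPolynomial (Fin n) R) M :=
    Module.compHom M (algebraMap (MvPolynomial (Fin n) R) (Localization.AtPrime p))
  have : IsScalarTower (MvPolynomial (Fin n) R) (Localization.AtPrime p) M :=
    IsScalarTower.of_algebraMap_smul fun _ _ => rfl
  have : IsScalarTower (Localization.AtPrime p) S M :=
    IsScalarTower.of_algebraMap_smul fun _ _ => rfl
  have : IsScalarTower R (MvPolynomial (Fin n) R) M := by
    refine IsScalarTower.of_algebraMap_smul fun a x => ?_
    change π (algebraMap (MvPolynomial (Fin n) R) (Localization.AtPrime p) (algebraMap R _ a)) • x = _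
    rw [← IsScalarTower.algebraMap_apply, AlgHom.commutes, algebraMap_smul]
  have hw1 : IsWeaklyRegular (MvPolynomial (Fin n) Q) (r0.map (algebraMap Q (MvPolynomial (Fin n) Q))) :=
    hr0.toIsWeaklyRegular.of_flat
  have hw2 : IsWeaklyRegular P ((r0.map (algebraMap Q (MvPolynomial (Fin n) Q))).map
      (algebraMap (MvPolynomial (Fin n) Q) P)) := hw1.of_flat
  refine main_abs R R' Q S M (Localization.AtPrime p) W P n p.primeCompl hπ g hg hgk.symm hP _ hw2 ?_ N0 e0 h
  have hr0k' : RingHom.ker gq = Ideal.ofList r0 := hr0k.symm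
  rw [hPk, ← map_ofList, ← map_ofList, ← hr0k']
  exact congrArg _ hker

end CIAscent

variable (R S M : Type u) [CommRing R] [CommRing S]
  [IsLocalRing R] [IsLocalRing S] [IsNoetherianRing R] [IsNoetherianRing S]
  [Algebra R S] [IsLocalHom (algebraMap R S)]
  [AddCommGroup M] [Module R M] [Module S M] [IsScalarTower R S M] [Module.Finite S M]

/-- Ascent of complete intersection flat dimension. -/
theorem ascent_CIfd_of_flat_eft_ci [Module.Flat R S] [Algebra.EssFiniteType R S]
    (hci : IsCIAt R S (algebraMap R S) (maximalIdeal S))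
    
    (hfd : HasFiniteCIDim R M) :
    HasFiniteCIDim S M := by
  exact CIAscent.final R S M hci hfd
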